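/- For all f, g ∈ K: (f,g) ∈ θ̄ if and only if (f,g) ∈ θ or {f,g} ⊆ {β⁰(Q), β¹(Q), β²(Q)} for some Q ∈ Cfg⋆. (Lemma 4.3(2).) -/

import Mathlib

namespace Paper

/-- Direction of a Turing-machine head move. -/
inductive Dir : Type
  | L | R
deriving DecidableEq

/-- A Turing machine with states μ₀, μ₁, …, μ_k (μ₀ the halting state): for each state
μ_i with 1 ≤ i ≤ k and each tape symbol r, exactly one instruction μ_i r s D μ_m,
recorded as `instr i r = (s, D, m)`.  (The value of `instr` at `i = 0` is irrelevant:
no instruction begins with μ₀.) -/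
structure TM (k : ℕ) : Type where
  instr : Fin (k + 1) → Bool → Bool × Dir × Fin (k + 1)

/-- The universe of the algebra B(T):
`zero` = 0, `P j` = P_j, `one`,`two`,`H` the sequential elements U, and the machine
elements `C b i r s` = C_{ir}^s, `D b i r s` = D_{ir}^s, `M b i r` = M_i^r, where
`b = true` marks the barred copy V̄. -/
inductive BT (k : ℕ) : Type
  | zero : BT k
  | P : Fin 3 → BT k
  | one : BT k
  | two : BT k
  | H : BT k
  | C : Bool → Fin (k + 1) → Bool → Bool → BT k
  | D : Bool → Fin (k + 1) → Bool → Bool → BT k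
  | M : Bool → Fin (k + 1) → Bool → BT k
deriving DecidableEq

namespace BT

variable {k : ℕ}

/-- The partial order of B(T): x ≤ y iff x = 0, or x = y, or (x = P₂ and y ∈ {P₀,P₁}). -/
def le (x y : BT k) : Prop :=
  x = zero ∨ x = y ∨ (x = P 2 ∧ (y = P 0 ∨ y = P 1))

/-- x ∧ y: the greatest lower bound for `le`. -/
def meet (x y : BT k) : BT k :=
  if x = y then x
  else if x = P 2 ∧ (y = P 0 ∨ y = P 1) then P 2
  else if y = P 2 ∧ (x = P 0 ∨ x = P 1) then P 2
  else if (x = P 0 ∨ x = P 1) ∧ (y = P 0 ∨ y = P 1) then P 2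
  else zero

/-- membership in P = {P₀,P₁,P₂} -/
def isP : BT k → Bool
  | P _ => true
  | _ => false

/-- membership in U = {1,2,H} -/
def isU : BT k → Bool
  | one => true
  | two => true
  | H => true
  | _ => false

/-- membership in V ∪ V̄ -/
def isVV : BT k → Bool
  | C _ _ _ _ => true
  | D _ _ _ _ => true
  | M _ _ _ => true
  | _ => false

/-- membership in U ∪ V ∪ V̄ -/
def isUVV (x : BT k) : Bool := isU x || isVV x

/-- membership in V₀ = {C_{0r}^s, D_{0r}^s, M₀^r} (unbarred, state μ₀) -/
def isV0 : BT k → Bool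
  | C false i _ _ => i == 0
  | D false i _ _ => i == 0
  | M false i _ => i == 0
  | _ => false

/-- membership in V₁₀⁰ = {C₁₀⁰, M₁⁰, D₁₀⁰} -/
def isV10 (x : BT k) : Bool :=
  x == C false 1 false false || x == M false 1 false || x == D false 1 false false

/-- the bar involution on V ∪ V̄ (identity elsewhere) -/
def barOp : BT k → BT k
  | C b i r s => C (!b) i r s
  | D b i r s => D (!b) i r s
  | M b i r => M (!b) i r
  | x => x

/-- s₀ = C₁₀⁰, s₁ = M₁⁰, s₂ = D₁₀⁰ -/
def sel : Fin 3 → BT k := ![C false 1 false false, M false 1 false, D false 1 false false]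

/-- x ∧ⁱ y = x if x = y ∈ (P ∪ V₁₀⁰) \ {s_i}, else 0. -/
def meetI (i : Fin 3) (x y : BT k) : BT k :=
  if x = y ∧ (isP x ∨ isV10 x) ∧ x ≠ sel i then x else zero

/-- T₀(x) = P₂ if x ∈ {P₀,P₂}; P₀ if x = P₁; x if x ∈ V₀; else 0. -/
def T0 : BT k → BT k
  | P j => if j = 1 then P 0 else P 2
  | C false i r s => if i = 0 then C false i r s else zero
  | D false i r s => if i = 0 then D false i r s else zero
  | M false i r => if i = 0 then M false i r else zero
  | _ => zero

/-- T₁(x,y). -/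
def T1 (x y : BT k) : BT k :=
  if (x = P 0 ∧ y = P 0) ∨ (x = P 0 ∧ y = P 1) ∨ (x = P 1 ∧ y = P 0) ∨
     (x = P 0 ∧ y = P 2) ∨ (x = P 2 ∧ y = P 0) then P 1
  else if (x = P 1 ∨ x = P 2) ∧ (y = P 1 ∨ y = P 2) then P 2
  else if x = y ∧ isV10 x then x
  else zero

/-- J′(x,y,z) = x ∧ z if x = y or {x,y} ⊆ P; x if x = ȳ ∈ V ∪ V̄; else 0. -/
def J' (x y z : BT k) : BT k :=
  if x = y ∨ (isP x ∧ isP y) then meet x z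
  else if isVV y ∧ x = barOp y then x
  else zero

/-- the ternary discriminator: t(x,y,z) = z if x = y, else x. -/
def disc (x y z : BT k) : BT k := if x = y then z else x

/-- S₁(u,x,y,z). -/
def S1 (u x y z : BT k) : BT k :=
  if (u = one ∨ u = two) ∧ x = y ∧ y = z ∧ isUVV x then x
  else if isP x ∧ isP y ∧ isP z then disc x y z
  else zero

/-- S₂(u,v,x,y,z). -/
def S2 (u v x y z : BT k) : BT k :=
  if isVV v ∧ u = barOp v ∧ x = y ∧ y = z ∧ isVV x then x
  else if isP x ∧ isP y ∧ isP z then disc x y z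
  else zero

/-- L_{irt} for the instruction μ_i r s L μ_m (the barred clause is handled by carrying
the bar `b` of the argument through). -/
def Lop (i : Fin (k + 1)) (r s : Bool) (m : Fin (k + 1)) (t : Bool) :
    BT k → BT k → BT k → BT k := fun x y u =>
  match u with
  | P j => if x = one ∧ y = one then P j else zero
  | C b i' r' s' =>
      if x = one ∧ y = one ∧ i' = i ∧ r' = r then C b m t s'
      else if x = H ∧ y = one ∧ i' = i ∧ r' = r ∧ s' = t then M b m t
      else zero
  | M b i' r' => if x = two ∧ y = H ∧ i' = i ∧ r' = r then D b m t s else zero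
  | D b i' r' s' => if x = two ∧ y = two ∧ i' = i ∧ r' = r then D b m t s' else zero
  | _ => zero

/-- R_{irt} for the instruction μ_i r s R μ_m. -/
def Rop (i : Fin (k + 1)) (r s : Bool) (m : Fin (k + 1)) (t : Bool) :
    BT k → BT k → BT k → BT k := fun x y u =>
  match u with
  | P j => if x = one ∧ y = one then P j else zero
  | C b i' r' s' => if x = one ∧ y = one ∧ i' = i ∧ r' = r then C b m t s' else zero
  | M b i' r' => if x = H ∧ y = one ∧ i' = i ∧ r' = r then C b m t s else zero
  | D b i' r' s' =>
      if x = two ∧ y = H ∧ i' = i ∧ r' = r ∧ s' = t then M b m t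
      else if x = two ∧ y = two ∧ i' = i ∧ r' = r then D b m t s'
      else zero
  | _ => zero

end BT

/-- The forward machine operation determined by the unique instruction of T beginning
with μ_i r (for 1 ≤ i ≤ k) and the symbol t. -/
def fwd {k : ℕ} (T : TM k) (i : Fin (k + 1)) (r t : Bool) :
    BT k → BT k → BT k → BT k :=
  match T.instr i r with
  | (s, Dir.L, m) => BT.Lop i r s m t
  | (s, Dir.R, m) => BT.Rop i r s m t

/-- the reverse of a machine operation: F°(x,y,u) = v when F(x,y,v) = u ≠ 0, else 0. -/
noncomputable def revOp {k : ℕ} (F : BT k → BT k → BT k → BT k) (x y u : BT k) : BT k :=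
  haveI := Classical.propDecidable (u ≠ BT.zero ∧ ∃ v, F x y v = u)
  if h : u ≠ BT.zero ∧ ∃ v, F x y v = u then h.2.choose else BT.zero

/-- The machine operations ℳ: `b = false` gives the forward operation, `b = true` the
reverse operation. -/
noncomputable def mop {k : ℕ} (T : TM k) (i : Fin (k + 1)) (r t : Bool) (b : Bool) :
    BT k → BT k → BT k → BT k :=
  match b with
  | false => fwd T i r t
  | true => revOp (fwd T i r t)

/-- The relation ≺ on U: 2≺2, 2≺H, H≺1, 1≺1. -/
def prec {k : ℕ} : BT k → BT k → Bool
  | BT.two, BT.two => true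
  | BT.two, BT.H => true
  | BT.H, BT.one => true
  | BT.one, BT.one => true
  | _, _ => false

/-- U_i¹ built from the machine operation F. -/
def U1op {k : ℕ} (F : BT k → BT k → BT k → BT k) (x y z u : BT k) : BT k :=
  if prec x y ∧ prec x z ∧ y ≠ z ∧ BT.isVV (F x y u) then BT.barOp (F x y u)
  else if prec x y ∧ y = z then F x y u
  else BT.zero

/-- U_i² built from the machine operation F. -/
def U2op {k : ℕ} (F : BT k → BT k → BT k → BT k) (x y z u : BT k) : BT k :=
  if prec x z ∧ prec y z ∧ x ≠ y ∧ BT.isVV (F y z u) then BT.barOp (F y z u)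
  else if x = y ∧ prec y z then F y z u
  else BT.zero

/-- The n-ary polynomials of the algebra B(T): functions obtained by composing the basic
operations (the constant 0, T₀, T₁, ∧, ∧⁰, ∧¹, ∧², J′, S₁, S₂, the forward and reverse
machine operations, and the U_i¹, U_i²), coordinate projections and constants. -/
inductive PolyB {k : ℕ} (T : TM k) : {n : ℕ} → ((Fin n → BT k) → BT k) → Prop where
  | proj {n : ℕ} (i : Fin n) : PolyB T fun v => v i
  | const {n : ℕ} (c : BT k) : PolyB T fun _ : Fin n → BT k => c
  | t0 {n : ℕ} {p : (Fin n → BT k) → BT k} :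
      PolyB T p → PolyB T fun v => BT.T0 (p v)
  | t1 {n : ℕ} {p q : (Fin n → BT k) → BT k} :
      PolyB T p → PolyB T q → PolyB T fun v => BT.T1 (p v) (q v)
  | meet {n : ℕ} {p q : (Fin n → BT k) → BT k} :
      PolyB T p → PolyB T q → PolyB T fun v => BT.meet (p v) (q v)
  | meetI (j : Fin 3) {n : ℕ} {p q : (Fin n → BT k) → BT k} :
      PolyB T p → PolyB T q → PolyB T fun v => BT.meetI j (p v) (q v)
  | jop {n : ℕ} {p q r : (Fin n → BT k) → BT k} :
      PolyB T p → PolyB T q → PolyB T r → PolyB T fun v => BT.J' (p v) (q v) (r v)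
  | s1 {n : ℕ} {p q r s : (Fin n → BT k) → BT k} :
      PolyB T p → PolyB T q → PolyB T r → PolyB T s →
      PolyB T fun v => BT.S1 (p v) (q v) (r v) (s v)
  | s2 {n : ℕ} {p q r s w : (Fin n → BT k) → BT k} :
      PolyB T p → PolyB T q → PolyB T r → PolyB T s → PolyB T w →
      PolyB T fun v => BT.S2 (p v) (q v) (r v) (s v) (w v)
  | mach (i : Fin (k + 1)) (hi : i ≠ 0) (r t b : Bool) {n : ℕ}
      {p q u : (Fin n → BT k) → BT k} :
      PolyB T p → PolyB T q → PolyB T u →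
      PolyB T fun v => mop T i r t b (p v) (q v) (u v)
  | u1 (i : Fin (k + 1)) (hi : i ≠ 0) (r t b : Bool) {n : ℕ}
      {p q r' s : (Fin n → BT k) → BT k} :
      PolyB T p → PolyB T q → PolyB T r' → PolyB T s →
      PolyB T fun v => U1op (mop T i r t b) (p v) (q v) (r' v) (s v)
  | u2 (i : Fin (k + 1)) (hi : i ≠ 0) (r t b : Bool) {n : ℕ}
      {p q r' s : (Fin n → BT k) → BT k} :
      PolyB T p → PolyB T q → PolyB T r' → PolyB T s →
      PolyB T fun v => U2op (mop T i r t b) (p v) (q v) (r' v) (s v)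

/-- unary polynomials of B(T) -/
def UPolyB {k : ℕ} (T : TM k) (F : BT k → BT k) : Prop :=
  PolyB T (n := 1) fun v => F (v 0)

/-- binary polynomials of B(T) -/
def BPolyB {k : ℕ} (T : TM k) (F : BT k → BT k → BT k) : Prop :=
  PolyB T (n := 2) fun v => F (v 0) (v 1)

/-- A Turing machine configuration ⟨tape, head position, state⟩. -/
structure Cfg (k : ℕ) : Type where
  tape : ℤ → Bool
  pos : ℤ
  state : Fin (k + 1)

/-- One computation step of T (halted configurations, in state μ₀, are fixed). -/
def cfgStep {k : ℕ} (T : TM k) (c : Cfg k) : Cfg k :=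
  if c.state = 0 then c
  else
    match T.instr c.state (c.tape c.pos) with
    | (s, Dir.L, m) => ⟨Function.update c.tape c.pos s, c.pos - 1, m⟩
    | (s, Dir.R, m) => ⟨Function.update c.tape c.pos s, c.pos + 1, m⟩

/-- The initial configuration Q₀ = ⟨t₀, 0, μ₁⟩, t₀ the all-zero tape. -/
def Q0 (k : ℕ) : Cfg k := ⟨fun _ => false, 0, 1⟩

/-- N = {n₀,…,n_m} ∪ {−1,0,1}: the squares visited during the halting computation
Q₀, …, Q_m, together with −1, 0, 1. -/
def Nset {k : ℕ} (T : TM k) (m : ℕ) : Finset ℤ :=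
  ((Finset.range (m + 1)).image fun j => ((cfgStep T)^[j] (Q0 k)).pos) ∪ {-1, 0, 1}

/-- The universe of the direct power A = B(T)^Y, where Y = {s₀} ∪ N: the coordinate
`none` is the extra coordinate s₀ ∉ N, and `some x` the coordinate x ∈ N. -/
abbrev AA {k : ℕ} (T : TM k) (m : ℕ) : Type := Option {x : ℤ // x ∈ Nset T m} → BT k

/-- The sequential generator a_n (n ∈ N). -/
def aEl {k : ℕ} (T : TM k) (m : ℕ) (n : ℤ) : AA T m := fun y =>
  match y with
  | none => BT.one
  | some x => if x.1 < n then BT.one else if x.1 = n then BT.H else BT.two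

/-- The generator q^j (j ∈ {0,1,2}). -/
def qEl {k : ℕ} (T : TM k) (m : ℕ) (j : Fin 3) : AA T m := fun y =>
  match y with
  | none => BT.P j
  | some x =>
      if x.1 < 0 then BT.C false 1 false false
      else if x.1 = 0 then BT.M false 1 false
      else BT.D false 1 false false

/-- K: the subalgebra of A = B(T)^Y generated by S ∪ {q⁰,q¹,q²}
(operations computed coordinatewise). -/
inductive InK {k : ℕ} (T : TM k) (m : ℕ) : AA T m → Prop where
  | gen_a (n : ℤ) (hn : n ∈ Nset T m) : InK T m (aEl T m n)
  | gen_q (j : Fin 3) : InK T m (qEl T m j)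
  | zeroOp : InK T m fun _ => BT.zero
  | t0 {f : AA T m} : InK T m f → InK T m fun y => BT.T0 (f y)
  | t1 {f g : AA T m} : InK T m f → InK T m g → InK T m fun y => BT.T1 (f y) (g y)
  | meet {f g : AA T m} : InK T m f → InK T m g → InK T m fun y => BT.meet (f y) (g y)
  | meetI (j : Fin 3) {f g : AA T m} :
      InK T m f → InK T m g → InK T m fun y => BT.meetI j (f y) (g y)
  | jop {f g h : AA T m} : InK T m f → InK T m g → InK T m h →
      InK T m fun y => BT.J' (f y) (g y) (h y)
  | s1 {f g h p : AA T m} : InK T m f → InK T m g → InK T m h → InK T m p →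
      InK T m fun y => BT.S1 (f y) (g y) (h y) (p y)
  | s2 {f g h p q : AA T m} : InK T m f → InK T m g → InK T m h → InK T m p → InK T m q →
      InK T m fun y => BT.S2 (f y) (g y) (h y) (p y) (q y)
  | mach (i : Fin (k + 1)) (hi : i ≠ 0) (r t b : Bool) {f g h : AA T m} :
      InK T m f → InK T m g → InK T m h →
      InK T m fun y => mop T i r t b (f y) (g y) (h y)
  | u1 (i : Fin (k + 1)) (hi : i ≠ 0) (r t b : Bool) {f g h p : AA T m} :
      InK T m f → InK T m g → InK T m h → InK T m p →
      InK T m fun y => U1op (mop T i r t b) (f y) (g y) (h y) (p y)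
  | u2 (i : Fin (k + 1)) (hi : i ≠ 0) (r t b : Bool) {f g h p : AA T m} :
      InK T m f → InK T m g → InK T m h → InK T m p →
      InK T m fun y => U2op (mop T i r t b) (f y) (g y) (h y) (p y)

/-- The n-ary polynomials of the algebra K: compositions of the basic operations
(computed coordinatewise), coordinate projections, and constants from K. -/
inductive PolyK {k : ℕ} (T : TM k) (m : ℕ) :
    {n : ℕ} → ((Fin n → AA T m) → AA T m) → Prop where
  | proj {n : ℕ} (i : Fin n) : PolyK T m fun v => v i
  | const {n : ℕ} (c : AA T m) (hc : InK T m c) : PolyK T m fun _ : Fin n → AA T m => c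
  | zeroOp {n : ℕ} : PolyK T m fun (_ : Fin n → AA T m) _ => BT.zero
  | t0 {n : ℕ} {p : (Fin n → AA T m) → AA T m} :
      PolyK T m p → PolyK T m fun v y => BT.T0 (p v y)
  | t1 {n : ℕ} {p q : (Fin n → AA T m) → AA T m} :
      PolyK T m p → PolyK T m q → PolyK T m fun v y => BT.T1 (p v y) (q v y)
  | meet {n : ℕ} {p q : (Fin n → AA T m) → AA T m} :
      PolyK T m p → PolyK T m q → PolyK T m fun v y => BT.meet (p v y) (q v y)
  | meetI (j : Fin 3) {n : ℕ} {p q : (Fin n → AA T m) → AA T m} :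
      PolyK T m p → PolyK T m q → PolyK T m fun v y => BT.meetI j (p v y) (q v y)
  | jop {n : ℕ} {p q r : (Fin n → AA T m) → AA T m} :
      PolyK T m p → PolyK T m q → PolyK T m r →
      PolyK T m fun v y => BT.J' (p v y) (q v y) (r v y)
  | s1 {n : ℕ} {p q r s : (Fin n → AA T m) → AA T m} :
      PolyK T m p → PolyK T m q → PolyK T m r → PolyK T m s →
      PolyK T m fun v y => BT.S1 (p v y) (q v y) (r v y) (s v y)
  | s2 {n : ℕ} {p q r s w : (Fin n → AA T m) → AA T m} :
      PolyK T m p → PolyK T m q → PolyK T m r → PolyK T m s → PolyK T m w →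
      PolyK T m fun v y => BT.S2 (p v y) (q v y) (r v y) (s v y) (w v y)
  | mach (i : Fin (k + 1)) (hi : i ≠ 0) (r t b : Bool) {n : ℕ}
      {p q u : (Fin n → AA T m) → AA T m} :
      PolyK T m p → PolyK T m q → PolyK T m u →
      PolyK T m fun v y => mop T i r t b (p v y) (q v y) (u v y)
  | u1 (i : Fin (k + 1)) (hi : i ≠ 0) (r t b : Bool) {n : ℕ}
      {p q r' s : (Fin n → AA T m) → AA T m} :
      PolyK T m p → PolyK T m q → PolyK T m r' → PolyK T m s →
      PolyK T m fun v y => U1op (mop T i r t b) (p v y) (q v y) (r' v y) (s v y)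
  | u2 (i : Fin (k + 1)) (hi : i ≠ 0) (r t b : Bool) {n : ℕ}
      {p q r' s : (Fin n → AA T m) → AA T m} :
      PolyK T m p → PolyK T m q → PolyK T m r' → PolyK T m s →
      PolyK T m fun v y => U2op (mop T i r t b) (p v y) (q v y) (r' v y) (s v y)

/-- unary polynomials of K -/
def UPolyK {k : ℕ} (T : TM k) (m : ℕ) (F : AA T m → AA T m) : Prop :=
  PolyK T m (n := 1) fun v => F (v 0)

/-- binary polynomials of K -/
def BPolyK {k : ℕ} (T : TM k) (m : ℕ) (F : AA T m → AA T m → AA T m) : Prop :=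
  PolyK T m (n := 2) fun v => F (v 0) (v 1)

/-- Q ∈ Cfg⋆: T, started in configuration Q, reaches the halting configuration
Q_m in finitely many steps, the head visiting only squares in N. -/
def InCfgStar {k : ℕ} (T : TM k) (m : ℕ) (Q : Cfg k) : Prop :=
  ∃ j : ℕ, (cfgStep T)^[j] Q = (cfgStep T)^[m] (Q0 k) ∧
    ∀ l ≤ j, ((cfgStep T)^[l] Q).pos ∈ Nset T m

/-- β^j(Q): the encoding of the configuration Q (with P_j in coordinate s₀). -/
def betaEl {k : ℕ} (T : TM k) (m : ℕ) (j : Fin 3) (Q : Cfg k) : AA T m := fun y =>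
  match y with
  | none => BT.P j
  | some x =>
      if x.1 < Q.pos then BT.C false Q.state (Q.tape Q.pos) (Q.tape x.1)
      else if x.1 = Q.pos then BT.M false Q.state (Q.tape Q.pos)
      else BT.D false Q.state (Q.tape Q.pos) (Q.tape x.1)

/-- K₀ = {f ∈ K : f(x) = 0 for some x ∈ N}. -/
def K0 {k : ℕ} (T : TM k) (m : ℕ) : Set (AA T m) :=
  {f | InK T m f ∧ ∃ x : {x : ℤ // x ∈ Nset T m}, f (some x) = BT.zero}

/-- S = {a_n : n ∈ N}. -/
def Sset {k : ℕ} (T : TM k) (m : ℕ) : Set (AA T m) :=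
  {f | ∃ n ∈ Nset T m, f = aEl T m n}

/-- Λ = {β^j(Q) : Q ∈ Cfg⋆, j ∈ {0,1,2}}. -/
def Lam {k : ℕ} (T : TM k) (m : ℕ) : Set (AA T m) :=
  {f | ∃ (j : Fin 3) (Q : Cfg k), InCfgStar T m Q ∧ f = betaEl T m j Q}

/-- θ: (f,g) ∈ θ iff f, g ∈ K and for every unary polynomial F of K,
F(f) = q² ⇔ F(g) = q². -/
def theta {k : ℕ} (T : TM k) (m : ℕ) (f g : AA T m) : Prop :=
  InK T m f ∧ InK T m g ∧
    ∀ F : AA T m → AA T m, UPolyK T m F → (F f = qEl T m 2 ↔ F g = qEl T m 2)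

/-- A congruence of K: an equivalence relation on K preserved by all basic operations. -/
structure IsCongK {k : ℕ} (T : TM k) (m : ℕ) (R : AA T m → AA T m → Prop) : Prop where
  refl : ∀ f, InK T m f → R f f
  symm : ∀ {f g}, R f g → R g f
  trans : ∀ {f g h}, R f g → R g h → R f h
  dom : ∀ {f g}, R f g → InK T m f ∧ InK T m g
  t0 : ∀ {f f'}, R f f' → R (fun y => BT.T0 (f y)) (fun y => BT.T0 (f' y))
  t1 : ∀ {f f' g g'}, R f f' → R g g' →
    R (fun y => BT.T1 (f y) (g y)) (fun y => BT.T1 (f' y) (g' y))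
  meet : ∀ {f f' g g'}, R f f' → R g g' →
    R (fun y => BT.meet (f y) (g y)) (fun y => BT.meet (f' y) (g' y))
  meetI : ∀ (j : Fin 3) {f f' g g'}, R f f' → R g g' →
    R (fun y => BT.meetI j (f y) (g y)) (fun y => BT.meetI j (f' y) (g' y))
  jop : ∀ {f f' g g' h h'}, R f f' → R g g' → R h h' →
    R (fun y => BT.J' (f y) (g y) (h y)) (fun y => BT.J' (f' y) (g' y) (h' y))
  s1 : ∀ {f f' g g' h h' p p'}, R f f' → R g g' → R h h' → R p p' →
    R (fun y => BT.S1 (f y) (g y) (h y) (p y))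
      (fun y => BT.S1 (f' y) (g' y) (h' y) (p' y))
  s2 : ∀ {f f' g g' h h' p p' q q'}, R f f' → R g g' → R h h' → R p p' → R q q' →
    R (fun y => BT.S2 (f y) (g y) (h y) (p y) (q y))
      (fun y => BT.S2 (f' y) (g' y) (h' y) (p' y) (q' y))
  mach : ∀ (i : Fin (k + 1)), i ≠ 0 → ∀ (r t b : Bool) {f f' g g' h h'},
    R f f' → R g g' → R h h' →
    R (fun y => mop T i r t b (f y) (g y) (h y))
      (fun y => mop T i r t b (f' y) (g' y) (h' y))
  u1 : ∀ (i : Fin (k + 1)), i ≠ 0 → ∀ (r t b : Bool) {f f' g g' h h' p p'},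
    R f f' → R g g' → R h h' → R p p' →
    R (fun y => U1op (mop T i r t b) (f y) (g y) (h y) (p y))
      (fun y => U1op (mop T i r t b) (f' y) (g' y) (h' y) (p' y))
  u2 : ∀ (i : Fin (k + 1)), i ≠ 0 → ∀ (r t b : Bool) {f f' g g' h h' p p'},
    R f f' → R g g' → R h h' → R p p' →
    R (fun y => U2op (mop T i r t b) (f y) (g y) (h y) (p y))
      (fun y => U2op (mop T i r t b) (f' y) (g' y) (h' y) (p' y))

/-- θ̄: the smallest congruence of K containing θ ∪ {(q⁰,q²)} (the intersection of all
congruences of K containing θ and (q⁰,q²)). -/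
def thetaBar {k : ℕ} (T : TM k) (m : ℕ) (f g : AA T m) : Prop :=
  InK T m f ∧ InK T m g ∧
    ∀ R : AA T m → AA T m → Prop, IsCongK T m R → (∀ a b, theta T m a b → R a b) →
      R (qEl T m 0) (qEl T m 2) → R f g


section Pointwise

variable {k : ℕ}

lemma Lop_ne_zero {i m : Fin (k + 1)} {r s t : Bool} {x y u : BT k}
    (h : BT.Lop i r s m t x y u ≠ BT.zero) :
    prec x y = true ∧ (BT.isP u = true ∨ BT.isVV u = true) := by
  cases u <;> cases x <;> cases y <;> simp_all [BT.Lop, prec, BT.isP, BT.isVV]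

lemma Rop_ne_zero {i m : Fin (k + 1)} {r s t : Bool} {x y u : BT k}
    (h : BT.Rop i r s m t x y u ≠ BT.zero) :
    prec x y = true ∧ (BT.isP u = true ∨ BT.isVV u = true) := by
  cases u <;> cases x <;> cases y <;> simp_all [BT.Rop, prec, BT.isP, BT.isVV]

lemma fwd_eq (T : TM k) (i : Fin (k + 1)) (r t : Bool) :
    fwd T i r t = match (T.instr i r).2.1 with
      | Dir.L => BT.Lop i r (T.instr i r).1 (T.instr i r).2.2 t
      | Dir.R => BT.Rop i r (T.instr i r).1 (T.instr i r).2.2 t := by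
  unfold fwd
  rcases T.instr i r with ⟨s, d, m⟩
  cases d <;> rfl

lemma fwd_ne_zero {T : TM k} {i : Fin (k + 1)} {r t : Bool} {x y u : BT k}
    (h : fwd T i r t x y u ≠ BT.zero) :
    prec x y = true ∧ (BT.isP u = true ∨ BT.isVV u = true) := by
  rw [fwd_eq] at h
  split at h
  · exact Lop_ne_zero h
  · exact Rop_ne_zero h

lemma fwd_isP {T : TM k} {i : Fin (k + 1)} {r t : Bool} {x y u : BT k}
    (h : fwd T i r t x y u ≠ BT.zero) : BT.isP (fwd T i r t x y u) = BT.isP u := by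
  rw [fwd_eq] at h ⊢
  split at h <;> cases u <;> simp_all only [BT.Lop, BT.Rop, ne_eq, not_true] <;>
    split_ifs at h ⊢ <;> simp_all [BT.isP]

lemma fwd_isVV {T : TM k} {i : Fin (k + 1)} {r t : Bool} {x y u : BT k}
    (h : fwd T i r t x y u ≠ BT.zero) : BT.isVV (fwd T i r t x y u) = BT.isVV u := by
  rw [fwd_eq] at h ⊢
  split at h <;> cases u <;> simp_all only [BT.Lop, BT.Rop, ne_eq, not_true] <;>
    split_ifs at h ⊢ <;> simp_all [BT.isVV]

lemma Lop_inj {i m : Fin (k + 1)} {r s t : Bool} {x y u v : BT k}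
    (h : BT.Lop i r s m t x y u ≠ BT.zero)
    (huv : BT.Lop i r s m t x y u = BT.Lop i r s m t x y v) : u = v := by
  obtain ⟨hp, -⟩ := Lop_ne_zero h
  cases x <;> cases y <;> simp [prec] at hp <;> cases u <;> simp [BT.Lop] at h <;>
    cases v <;> simp [BT.Lop, h] at huv <;> grind

lemma Rop_inj {i m : Fin (k + 1)} {r s t : Bool} {x y u v : BT k}
    (h : BT.Rop i r s m t x y u ≠ BT.zero)
    (huv : BT.Rop i r s m t x y u = BT.Rop i r s m t x y v) : u = v := by
  obtain ⟨hp, -⟩ := Rop_ne_zero h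
  cases x <;> cases y <;> simp [prec] at hp <;> cases u <;> simp [BT.Rop] at h <;>
    cases v <;> simp [BT.Rop, h] at huv <;> grind

lemma fwd_inj {T : TM k} {i : Fin (k + 1)} {r t : Bool} {x y u v : BT k}
    (h : fwd T i r t x y u ≠ BT.zero)
    (huv : fwd T i r t x y u = fwd T i r t x y v) : u = v := by
  rw [fwd_eq] at h huv
  split at h <;> rename_i hd <;> rw [hd] at huv
  · exact Lop_inj h huv
  · exact Rop_inj h huv

lemma fwd_revOp {F : BT k → BT k → BT k → BT k} {x y u : BT k}
    (h : revOp F x y u ≠ BT.zero) : u ≠ BT.zero ∧ F x y (revOp F x y u) = u := by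
  unfold revOp at h ⊢
  split_ifs at h ⊢ with h'
  · exact ⟨h'.1, h'.2.choose_spec⟩
  · exact absurd rfl h

lemma revOp_fwd {T : TM k} {i : Fin (k + 1)} {r t : Bool} {x y u v : BT k}
    (h : fwd T i r t x y v = u) (hu : u ≠ BT.zero) : revOp (fwd T i r t) x y u = v := by
  have h' : u ≠ BT.zero ∧ ∃ w, fwd T i r t x y w = u := ⟨hu, v, h⟩
  unfold revOp
  rw [dif_pos h']
  have := h'.2.choose_spec
  exact fwd_inj (by rw [this]; exact hu) (this.trans h.symm)

lemma mop_ne_zero {T : TM k} {i : Fin (k + 1)} {r t b : Bool} {x y u : BT k}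
    (h : mop T i r t b x y u ≠ BT.zero) :
    prec x y = true ∧ (BT.isP u = true ∨ BT.isVV u = true) := by
  cases b
  · exact fwd_ne_zero h
  · obtain ⟨hu, he⟩ := fwd_revOp h
    have h1 : fwd T i r t x y (revOp (fwd T i r t) x y u) ≠ BT.zero := by rwa [he]
    have h2 := fwd_ne_zero h1
    rwa [← fwd_isP h1, ← fwd_isVV h1, he] at h2

lemma mop_isP {T : TM k} {i : Fin (k + 1)} {r t b : Bool} {x y u : BT k}
    (h : mop T i r t b x y u ≠ BT.zero) : BT.isP (mop T i r t b x y u) = BT.isP u := by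
  cases b
  · exact fwd_isP h
  · obtain ⟨hu, he⟩ := fwd_revOp h
    have h1 : fwd T i r t x y (revOp (fwd T i r t) x y u) ≠ BT.zero := by rwa [he]
    have h2 := fwd_isP h1
    rw [he] at h2
    exact h2.symm

lemma ne_zero_of_isP_or_isVV {u : BT k} (h : BT.isP u = true ∨ BT.isVV u = true) :
    u ≠ BT.zero := by
  rintro rfl
  simp [BT.isP, BT.isVV] at h

end Pointwise

section Configurations

variable {k : ℕ} {T : TM k} {m : ℕ}

lemma cfgStep_of_state_eq_zero {Q : Cfg k} (h : Q.state = 0) : cfgStep T Q = Q := by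
  simp [cfgStep, h]

lemma iterate_cfgStep_of_state_eq_zero {Q : Cfg k} (h : Q.state = 0) (j : ℕ) :
    (cfgStep T)^[j] Q = Q :=
  Function.iterate_fixed (cfgStep_of_state_eq_zero h) j

lemma cfgStep_of_state_ne_zero {Q : Cfg k} (h : Q.state ≠ 0) :
    cfgStep T Q = ⟨Function.update Q.tape Q.pos (T.instr Q.state (Q.tape Q.pos)).1,
      match (T.instr Q.state (Q.tape Q.pos)).2.1 with
        | Dir.L => Q.pos - 1
        | Dir.R => Q.pos + 1,
      (T.instr Q.state (Q.tape Q.pos)).2.2⟩ := by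
  unfold cfgStep
  rw [if_neg h]
  rcases T.instr Q.state (Q.tape Q.pos) with ⟨s, d, i⟩
  cases d <;> rfl

lemma cfgStep_pos (Q : Cfg k) : |(cfgStep T Q).pos - Q.pos| ≤ 1 := by
  by_cases h : Q.state = 0
  · simp [cfgStep_of_state_eq_zero h]
  · rw [cfgStep_of_state_ne_zero h]
    dsimp only
    split <;> simp

lemma cfgStep_tape_of_ne {Q : Cfg k} {x : ℤ} (hx : x ≠ Q.pos) :
    (cfgStep T Q).tape x = Q.tape x := by
  by_cases h : Q.state = 0
  · simp [cfgStep_of_state_eq_zero h]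
  · rw [cfgStep_of_state_ne_zero h]
    simp [hx]

lemma mem_Nset {x : ℤ} : x ∈ Nset T m ↔
    (∃ j ≤ m, ((cfgStep T)^[j] (Q0 k)).pos = x) ∨ x = -1 ∨ x = 0 ∨ x = 1 := by
  simp only [Nset, Finset.mem_union, Finset.mem_image, Finset.mem_range, Nat.lt_succ_iff,
    Finset.mem_insert, Finset.mem_singleton]

lemma mem_Nset_of_between {j : ℕ} (hj : j ≤ m) {x : ℤ}
    (hx : (0 ≤ x ∧ x ≤ ((cfgStep T)^[j] (Q0 k)).pos) ∨
      (((cfgStep T)^[j] (Q0 k)).pos ≤ x ∧ x ≤ 0)) : x ∈ Nset T m := by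
  induction j with
  | zero =>
    have : x = 0 := by simp [Q0] at hx; omega
    exact mem_Nset.2 (by simp [this])
  | succ j ih =>
    have hs := cfgStep_pos (T := T) ((cfgStep T)^[j] (Q0 k))
    rw [← Function.iterate_succ_apply' (cfgStep T), Nat.succ_eq_add_one, abs_le] at hs
    by_cases he : x = ((cfgStep T)^[j + 1] (Q0 k)).pos
    · exact mem_Nset.2 (Or.inl ⟨j + 1, hj, he.symm⟩)
    · exact ih (by omega) (by omega)

lemma add_one_mem_Nset {n n' : ℤ} (hn : n ∈ Nset T m) (hn' : n' ∈ Nset T m) (h : n < n') :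
    n + 1 ∈ Nset T m := by
  by_cases h0 : 0 ≤ n
  · rcases mem_Nset.1 hn' with ⟨j, hj, rfl⟩ | h1
    · exact mem_Nset_of_between hj (by omega)
    · exact mem_Nset.2 (by omega)
  · rcases mem_Nset.1 hn with ⟨j, hj, rfl⟩ | h1
    · exact mem_Nset_of_between hj (by omega)
    · exact mem_Nset.2 (by omega)

lemma InCfgStar.pos_mem {Q : Cfg k} (h : InCfgStar T m Q) : Q.pos ∈ Nset T m := by
  obtain ⟨j, -, hj⟩ := h
  exact hj 0 (Nat.zero_le _)

lemma inCfgStar_Q0 : InCfgStar T m (Q0 k) :=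
  ⟨m, rfl, fun l hl => mem_Nset.2 (Or.inl ⟨l, hl, rfl⟩)⟩

lemma InCfgStar.step (hm : ((cfgStep T)^[m] (Q0 k)).state = 0) {Q : Cfg k}
    (h : InCfgStar T m Q) (h0 : Q.state ≠ 0) : InCfgStar T m (cfgStep T Q) := by
  obtain ⟨j, hj, hp⟩ := h
  cases j with
  | zero =>
    rw [Function.iterate_zero_apply] at hj
    exact absurd (hj ▸ hm) h0
  | succ j => exact ⟨j, hj, fun l hl => hp (l + 1) (by omega)⟩

lemma InCfgStar.of_step {Q : Cfg k} (h : InCfgStar T m (cfgStep T Q))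
    (hQ : Q.pos ∈ Nset T m) : InCfgStar T m Q := by
  obtain ⟨j, hj, hp⟩ := h
  refine ⟨j + 1, hj, fun l hl => ?_⟩
  cases l with
  | zero => exact hQ
  | succ l => exact hp l (by omega)

lemma InCfgStar.induction (hm : ((cfgStep T)^[m] (Q0 k)).state = 0) {p : Cfg k → Prop}
    (h0 : p (Q0 k))
    (hstep : ∀ Q, InCfgStar T m Q → Q.state ≠ 0 → InCfgStar T m (cfgStep T Q) →
      (p Q ↔ p (cfgStep T Q))) {Q : Cfg k} (hQ : InCfgStar T m Q) : p Q := by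
  have key : ∀ Q, InCfgStar T m Q → (p Q ↔ p (cfgStep T Q)) := by
    intro Q hQ
    by_cases hs : Q.state = 0
    · rw [cfgStep_of_state_eq_zero hs]
    · exact hstep Q hQ hs (hQ.step hm hs)
  have forward : ∀ l ≤ m, p ((cfgStep T)^[l] (Q0 k)) := by
    intro l
    induction l with
    | zero => exact fun _ => h0
    | succ l ih =>
      intro hl
      rw [Function.iterate_succ_apply']
      refine (key _ ⟨m - l, ?_, fun i hi => ?_⟩).1 (ih (by omega))
      · rw [← Function.iterate_add_apply]
        congr 2
        omega
      · rw [← Function.iterate_add_apply]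
        exact mem_Nset.2 (Or.inl ⟨i + l, by omega, rfl⟩)
  obtain ⟨j, hj, hp⟩ := hQ
  induction j generalizing Q with
  | zero =>
    rw [Function.iterate_zero_apply] at hj
    exact hj ▸ forward m le_rfl
  | succ j ih => exact (key Q ⟨j + 1, hj, hp⟩).2 (ih hj fun l hl => hp (l + 1) (by omega))

lemma iterate_cfgStep_tape {Q : Cfg k} {x : ℤ} (hx : x ∉ Nset T m) {j : ℕ}
    (hp : ∀ l ≤ j, ((cfgStep T)^[l] Q).pos ∈ Nset T m) :
    ((cfgStep T)^[j] Q).tape x = Q.tape x := by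
  induction j with
  | zero => rfl
  | succ j ih =>
    rw [Function.iterate_succ_apply', cfgStep_tape_of_ne, ih fun l hl => hp l (by omega)]
    exact fun h => hx (h ▸ hp j (by omega))

lemma InCfgStar.tape_eq_false {Q : Cfg k} (h : InCfgStar T m Q) {x : ℤ}
    (hx : x ∉ Nset T m) : Q.tape x = false := by
  obtain ⟨j, hj, hp⟩ := h
  rw [← iterate_cfgStep_tape hx hp, hj,
    iterate_cfgStep_tape hx fun l hl => mem_Nset.2 (Or.inl ⟨l, hl, rfl⟩)]
  rfl

/-- The configuration `Q` translated by `n` squares. -/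
def Cfg.shift (n : ℤ) (Q : Cfg k) : Cfg k := ⟨fun x => Q.tape (x - n), Q.pos + n, Q.state⟩

lemma cfgStep_shift (n : ℤ) (Q : Cfg k) :
    cfgStep T (Q.shift n) = (cfgStep T Q).shift n := by
  by_cases h : Q.state = 0
  · rw [cfgStep_of_state_eq_zero h, cfgStep_of_state_eq_zero (by exact h)]
  · rw [cfgStep_of_state_ne_zero h, cfgStep_of_state_ne_zero (by exact h)]
    simp only [Cfg.shift, add_sub_cancel_right, Cfg.mk.injEq, and_true]
    constructor
    · funext x
      simp only [Function.update_apply, sub_eq_iff_eq_add]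
    · split <;> omega

lemma eq_zero_of_inCfgStar_shift (hm : ((cfgStep T)^[m] (Q0 k)).state = 0) {n : ℤ}
    (h : InCfgStar T m ((Q0 k).shift n)) : n = 0 := by
  obtain ⟨j, hj, -⟩ := h
  have hc : Function.Semiconj (Cfg.shift n) (cfgStep T) (cfgStep T) :=
    fun Q => (cfgStep_shift n Q).symm
  have h1 : (cfgStep T)^[m + j] ((Q0 k).shift n) = (cfgStep T)^[m] (Q0 k) := by
    rw [Function.iterate_add_apply, hj, iterate_cfgStep_of_state_eq_zero hm]
  rw [add_comm, ← hc.iterate_right _ _, Function.iterate_add_apply,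
    iterate_cfgStep_of_state_eq_zero hm] at h1
  have := congrArg Cfg.pos h1
  simpa [Cfg.shift] using this

end Configurations

section Encoding

variable {k : ℕ} {T : TM k} {m : ℕ}

lemma qEl_eq_betaEl (j : Fin 3) : qEl T m j = betaEl T m j (Q0 k) := by
  funext y
  cases y <;> rfl

lemma betaEl_isVV (j : Fin 3) (Q : Cfg k) (x : {x : ℤ // x ∈ Nset T m}) :
    BT.isVV (betaEl T m j Q (some x)) = true := by
  simp only [betaEl]
  split_ifs <;> rfl

lemma barOp_betaEl_ne (j j' : Fin 3) (Q Q' : Cfg k) (x : {x : ℤ // x ∈ Nset T m}) :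
    betaEl T m j Q (some x) ≠ BT.barOp (betaEl T m j' Q' (some x)) := by
  simp only [betaEl]
  split_ifs <;> simp [BT.barOp]

lemma aEl_isU (n : ℤ) (y : Option {x : ℤ // x ∈ Nset T m}) :
    BT.isU (aEl T m n y) = true := by
  rcases y with _ | x
  · rfl
  · simp only [aEl]
    split_ifs <;> rfl

lemma aEl_injective_on {n n' : ℤ} (hn : n ∈ Nset T m)
    (h : ∀ x, aEl T m n (some x) = aEl T m n' (some x)) : n = n' := by
  have h1 := h ⟨n, hn⟩
  simp only [aEl, lt_irrefl, if_false, if_true] at h1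
  split_ifs at h1
  assumption

lemma eq_add_one_of_prec {n n' : ℤ} (hn : n ∈ Nset T m) (hn' : n' ∈ Nset T m)
    (h : ∀ x, prec (aEl T m n (some x)) (aEl T m n' (some x)) = true) : n' = n + 1 := by
  have h1 := h ⟨n, hn⟩
  have hlt : n < n' := by
    by_contra hlt
    simp only [aEl, lt_irrefl, if_false, if_true, if_neg hlt] at h1
    split_ifs at h1 <;> simp [prec] at h1
  have h2 := h ⟨n + 1, add_one_mem_Nset hn hn' hlt⟩
  by_contra hne
  have h3 : n + 1 < n' := by omega
  simp [aEl, h3, prec] at h2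

lemma InCfgStar.eq_of_betaEl_eq {Q Q' : Cfg k} (hQ : InCfgStar T m Q)
    (hQ' : InCfgStar T m Q') {j j' : Fin 3}
    (h : ∀ x, betaEl T m j Q (some x) = betaEl T m j' Q' (some x)) : Q = Q' := by
  have h1 := h ⟨Q.pos, hQ.pos_mem⟩
  simp only [betaEl, lt_irrefl, if_false, if_true] at h1
  have hpos : Q.pos = Q'.pos := by
    split_ifs at h1
    assumption
  have htape : Q.tape = Q'.tape := by
    funext x
    by_cases hx : x ∈ Nset T m
    · have h2 := h ⟨x, hx⟩
      rcases lt_trichotomy x Q.pos with hlt | heq | hgt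
      · have hlt' := hpos ▸ hlt
        simp only [betaEl, if_pos hlt, if_pos hlt', BT.C.injEq] at h2
        exact h2.2.2.2
      · subst heq
        simp only [hpos, lt_irrefl, if_false, if_true, BT.M.injEq] at h1
        rw [hpos]
        exact h1.2.2
      · have hgt' := hpos ▸ hgt
        simp only [betaEl, if_neg hgt.not_gt, if_neg hgt'.not_gt, if_neg hgt.ne',
          if_neg hgt'.ne', BT.D.injEq] at h2
        exact h2.2.2.2
    · rw [hQ.tape_eq_false hx, hQ'.tape_eq_false hx]
  have hstate : Q.state = Q'.state := by
    simp only [hpos, lt_irrefl, if_false, if_true, BT.M.injEq] at h1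
    exact h1.2.1
  rcases Q with ⟨t, p, s⟩
  rcases Q' with ⟨t', p', s'⟩
  simp_all

/-- The left one of the two squares between which the head moves from `Q`. -/
def leftPos (T : TM k) (Q : Cfg k) : ℤ := min Q.pos (cfgStep T Q).pos

lemma fwd_betaEl {Q : Cfg k} (h : Q.state ≠ 0) (j : Fin 3)
    (y : Option {x : ℤ // x ∈ Nset T m}) :
    fwd T Q.state (Q.tape Q.pos) ((cfgStep T Q).tape (cfgStep T Q).pos)
      (aEl T m (leftPos T Q) y) (aEl T m (leftPos T Q + 1) y) (betaEl T m j Q y) =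
    betaEl T m j (cfgStep T Q) y := by
  rw [fwd_eq, leftPos, cfgStep_of_state_ne_zero h]
  rcases T.instr Q.state (Q.tape Q.pos) with ⟨s, d, i⟩
  cases d
  · rcases y with _ | ⟨x, hx⟩
    · simp [aEl, betaEl, BT.Lop]
    · rcases lt_trichotomy x (Q.pos - 1) with h1 | h1 | h1
      · have h2 : x < Q.pos := by omega
        simp [aEl, betaEl, BT.Lop, h1, h2, h2.ne]
      · subst h1
        simp [aEl, betaEl, BT.Lop]
      · rcases lt_or_eq_of_le (show Q.pos ≤ x by omega) with h2 | h2
        · simp [aEl, betaEl, BT.Lop, h1.not_gt, h1.ne', h2.not_gt, h2.ne']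
        · subst h2
          simp [aEl, betaEl, BT.Lop, h1.not_gt, h1.ne']
  · rcases y with _ | ⟨x, hx⟩
    · simp [aEl, betaEl, BT.Rop]
    · rcases lt_trichotomy x Q.pos with h1 | h1 | h1
      · have h2 : x < Q.pos + 1 := by omega
        simp [aEl, betaEl, BT.Rop, h1, h2, h1.ne]
      · subst h1
        simp [aEl, betaEl, BT.Rop]
      · rcases lt_or_eq_of_le (show Q.pos + 1 ≤ x by omega) with h2 | h2
        · simp [aEl, betaEl, BT.Rop, h1.not_gt, h1.ne', h2.not_gt, h2.ne']
        · subst h2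
          simp [aEl, betaEl, BT.Rop]

lemma betaEl_ne_zero (j : Fin 3) (Q : Cfg k) (y : Option {x : ℤ // x ∈ Nset T m}) :
    betaEl T m j Q y ≠ BT.zero := by
  rcases y with _ | x
  · simp [betaEl]
  · exact ne_zero_of_isP_or_isVV (Or.inr (betaEl_isVV j Q x))

lemma revOp_betaEl {Q : Cfg k} (h : Q.state ≠ 0) (j : Fin 3)
    (y : Option {x : ℤ // x ∈ Nset T m}) :
    revOp (fwd T Q.state (Q.tape Q.pos) ((cfgStep T Q).tape (cfgStep T Q).pos))
      (aEl T m (leftPos T Q) y) (aEl T m (leftPos T Q + 1) y) (betaEl T m j (cfgStep T Q) y) =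
    betaEl T m j Q y :=
  revOp_fwd (fwd_betaEl h j y) (betaEl_ne_zero _ _ _)

lemma fwd_betaEl_inv {i : Fin (k + 1)} (hi : i ≠ 0) {r t : Bool} {n : ℤ} {j : Fin 3} {Q : Cfg k}
    (hn : n ∈ Nset T m) (hn' : n + 1 ∈ Nset T m)
    (h : ∀ x : {x : ℤ // x ∈ Nset T m}, fwd T i r t (aEl T m n (some x))
      (aEl T m (n + 1) (some x)) (betaEl T m j Q (some x)) ≠ BT.zero) :
    Q.state = i ∧ Q.tape Q.pos = r ∧ (cfgStep T Q).tape (cfgStep T Q).pos = t ∧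
      leftPos T Q = n := by
  have h1 := h ⟨n, hn⟩
  have h2 := h ⟨n + 1, hn'⟩
  have e1 : aEl T m n (some ⟨n, hn⟩) = BT.H := by simp [aEl]
  have e2 : aEl T m (n + 1) (some ⟨n, hn⟩) = BT.one := by simp [aEl]
  have e3 : aEl T m n (some ⟨n + 1, hn'⟩) = BT.two := by simp [aEl]
  have e4 : aEl T m (n + 1) (some ⟨n + 1, hn'⟩) = BT.H := by simp [aEl]
  rw [e1, e2, fwd_eq] at h1
  rw [e3, e4, fwd_eq] at h2
  rcases hI : T.instr i r with ⟨s, d, i'⟩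
  rw [hI] at h1 h2
  cases d
  · simp only [betaEl] at h1 h2
    have hp : n + 1 = Q.pos := by
      by_contra hp
      split_ifs at h2 <;> simp [BT.Lop] at h2
    have hs : n < Q.pos := by omega
    simp only [hs, if_true, BT.Lop, ne_eq] at h1
    simp [← hp] at h1
    obtain ⟨rfl, hr, ht⟩ := h1
    rw [hp] at hr
    have hst := cfgStep_of_state_ne_zero (T := T) hi
    rw [hr, hI] at hst
    refine ⟨rfl, hr, ?_, ?_⟩
    · rw [hst]
      simp [← ht, ← hp]
    · rw [leftPos, hst]
      simp [← hp]
  · simp only [betaEl] at h1 h2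
    have hp : n = Q.pos := by
      by_contra hp
      split_ifs at h1 <;> simp [BT.Rop] at h1
    subst hp
    simp [BT.Rop] at h1 h2
    obtain ⟨rfl, hr⟩ := h1
    have hst := cfgStep_of_state_ne_zero (T := T) hi
    rw [hr, hI] at hst
    refine ⟨rfl, hr, ?_, ?_⟩
    · rw [hst]
      simp [h2]
    · rw [leftPos, hst]
      simp

lemma revOp_betaEl_inv {i : Fin (k + 1)} (hi : i ≠ 0) {r t : Bool} {n : ℤ} {j : Fin 3} {Q : Cfg k}
    (hn : n ∈ Nset T m) (hn' : n + 1 ∈ Nset T m)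
    (h : ∀ x : {x : ℤ // x ∈ Nset T m}, revOp (fwd T i r t) (aEl T m n (some x))
      (aEl T m (n + 1) (some x)) (betaEl T m j Q (some x)) ≠ BT.zero) :
    ∃ Q' : Cfg k, cfgStep T Q' = Q ∧ Q'.pos ∈ Nset T m ∧ Q'.state = i ∧ Q'.tape Q'.pos = r ∧
      Q.tape Q.pos = t ∧ leftPos T Q' = n := by
  obtain ⟨-, h1⟩ := fwd_revOp (h ⟨n, hn⟩)
  obtain ⟨-, h2⟩ := fwd_revOp (h ⟨n + 1, hn'⟩)
  generalize revOp (fwd T i r t) (aEl T m n (some ⟨n, hn⟩))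
      (aEl T m (n + 1) (some ⟨n, hn⟩)) (betaEl T m j Q (some ⟨n, hn⟩)) = v1 at h1
  generalize revOp (fwd T i r t) (aEl T m n (some ⟨n + 1, hn'⟩))
      (aEl T m (n + 1) (some ⟨n + 1, hn'⟩)) (betaEl T m j Q (some ⟨n + 1, hn'⟩)) = v2 at h2
  have e1 : aEl T m n (some ⟨n, hn⟩) = BT.H := by simp [aEl]
  have e2 : aEl T m (n + 1) (some ⟨n, hn⟩) = BT.one := by simp [aEl]
  have e3 : aEl T m n (some ⟨n + 1, hn'⟩) = BT.two := by simp [aEl]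
  have e4 : aEl T m (n + 1) (some ⟨n + 1, hn'⟩) = BT.H := by simp [aEl]
  rw [e1, e2, fwd_eq] at h1
  rw [e3, e4, fwd_eq] at h2
  rcases hI : T.instr i r with ⟨s, d, i'⟩
  rw [hI] at h1 h2
  cases d
  · have hp : n = Q.pos := by
      by_contra hp
      simp only [betaEl] at h1
      cases v1 <;> simp only [BT.Lop] at h1 <;> split_ifs at h1 <;> simp_all
    subst hp
    simp only [betaEl] at h1 h2
    have hv1 : i' = Q.state ∧ t = Q.tape Q.pos := by
      cases v1 <;> simp [BT.Lop] at h1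
      split_ifs at h1
      simp_all
    have hv2 : s = Q.tape (Q.pos + 1) := by
      cases v2 <;> simp [BT.Lop] at h2
      split_ifs at h2
      simp_all
    have hst := cfgStep_of_state_ne_zero (T := T)
      (Q := ⟨Function.update Q.tape (Q.pos + 1) r, Q.pos + 1, i⟩) hi
    simp only [Function.update_self, hI] at hst
    have hQ : cfgStep T ⟨Function.update Q.tape (Q.pos + 1) r, Q.pos + 1, i⟩ = Q := by
      rw [hst]
      rcases Q with ⟨t, p, q⟩
      simp [hv1, hv2]
    refine ⟨_, hQ, hn', rfl, by simp, hv1.2.symm, ?_⟩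
    rw [leftPos, hQ]
    simp
  · have hp : n + 1 = Q.pos := by
      by_contra hp
      simp only [betaEl] at h2
      cases v2 <;> simp only [BT.Rop] at h2 <;> split_ifs at h2 <;> simp_all
    have hs : n < Q.pos := by omega
    simp only [betaEl] at h1 h2
    have hv1 : s = Q.tape n := by
      cases v1 <;> simp [BT.Rop, hs] at h1
      split_ifs at h1
      simp_all
    have hv2 : i' = Q.state ∧ t = Q.tape Q.pos := by
      cases v2 <;> simp [BT.Rop, hp] at h2
      split_ifs at h2
      simp_all
    have hst := cfgStep_of_state_ne_zero (T := T) (Q := ⟨Function.update Q.tape n r, n, i⟩) hi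
    simp only [Function.update_self, hI] at hst
    have hQ : cfgStep T ⟨Function.update Q.tape n r, n, i⟩ = Q := by
      rw [hst]
      rcases Q with ⟨t, p, q⟩
      simp_all
    refine ⟨_, hQ, hn, rfl, by simp, hv2.2.symm, ?_⟩
    rw [leftPos, hQ]
    simp [hs.le]

end Encoding

section NotP

variable {k : ℕ}

lemma T0_notP {x : BT k} (hx : BT.isP x = false) : BT.isP (BT.T0 x) = false := by
  rcases x with _ | j | _ | _ | _ | ⟨_ | _, i, r, s⟩ | ⟨_ | _, i, r, s⟩ | ⟨_ | _, i, r⟩ <;>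
    simp only [BT.T0] <;> first | rfl | (split_ifs <;> first | rfl | exact hx)

lemma meet_of_notP {x y : BT k} (hx : BT.isP x = false) (hy : BT.isP y = false) :
    BT.meet x y = if x = y then x else BT.zero := by
  cases x <;> cases y <;> simp_all [BT.meet, BT.isP]

lemma T1_of_notP {x y : BT k} (hx : BT.isP x = false) (hy : BT.isP y = false) :
    BT.T1 x y = if x = y ∧ BT.isV10 x then x else BT.zero := by
  cases x <;> cases y <;> simp_all [BT.T1, BT.isP]

lemma meetI_of_notP {i : Fin 3} {x y : BT k} (hx : BT.isP x = false) :
    BT.meetI i x y = if x = y ∧ BT.isV10 x ∧ x ≠ BT.sel i then x else BT.zero := by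
  simp [BT.meetI, hx]

lemma J'_of_notP {x y z : BT k} (hx : BT.isP x = false) (hz : BT.isP z = false) :
    BT.J' x y z = if x = y ∧ x = z ∨ BT.isVV y ∧ x = BT.barOp y then x else BT.zero := by
  have hb : BT.isVV y = true → y ≠ BT.barOp y := by cases y <;> simp [BT.isVV, BT.barOp]
  simp only [BT.J', hx, meet_of_notP hx hz]
  grind

lemma S1_of_notP {u x y z : BT k} (hx : BT.isP x = false) :
    BT.S1 u x y z =
      if (u = BT.one ∨ u = BT.two) ∧ x = y ∧ y = z ∧ BT.isUVV x then x else BT.zero := by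
  simp [BT.S1, hx]

lemma S2_of_notP {u v x y z : BT k} (hx : BT.isP x = false) :
    BT.S2 u v x y z =
      if BT.isVV v ∧ u = BT.barOp v ∧ x = y ∧ y = z ∧ BT.isVV x then x else BT.zero := by
  simp [BT.S2, hx]

lemma ite_notP {c : Prop} [Decidable c] {x : BT k} (hx : BT.isP x = false) :
    BT.isP (if c then x else BT.zero) = false := by
  split_ifs
  exacts [hx, rfl]

lemma mop_notP {T : TM k} {i : Fin (k + 1)} {r t b : Bool} {x y u : BT k}
    (hu : BT.isP u = false) : BT.isP (mop T i r t b x y u) = false := by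
  by_cases h : mop T i r t b x y u = BT.zero
  · rw [h]; rfl
  · rw [mop_isP h, hu]

lemma barOp_notP {x : BT k} (hx : BT.isP x = false) : BT.isP (BT.barOp x) = false := by
  cases x <;> simp_all [BT.isP, BT.barOp]

lemma U1op_notP {T : TM k} {i : Fin (k + 1)} {r t b : Bool} {x y z u : BT k}
    (hu : BT.isP u = false) : BT.isP (U1op (mop T i r t b) x y z u) = false := by
  unfold U1op
  split_ifs
  exacts [barOp_notP (mop_notP hu), mop_notP hu, rfl]

lemma U2op_notP {T : TM k} {i : Fin (k + 1)} {r t b : Bool} {x y z u : BT k}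
    (hu : BT.isP u = false) : BT.isP (U2op (mop T i r t b) x y z u) = false := by
  unfold U2op
  split_ifs
  exacts [barOp_notP (mop_notP hu), mop_notP hu, rfl]

end NotP

section Regular

variable {k : ℕ} {T : TM k} {m : ℕ}

/-- `f` vanishes nowhere on the squares of `N`. -/
def NonvanishingOn (T : TM k) (m : ℕ) (f : AA T m) : Prop := ∀ x, f (some x) ≠ BT.zero

/-- `f ∈ S ∪ Λ`. -/
def Regular (T : TM k) (m : ℕ) (f : AA T m) : Prop := f ∈ Sset T m ∨ f ∈ Lam T m

/-- An invariant satisfied by every member of `K`. -/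
structure Tame (T : TM k) (m : ℕ) (f : AA T m) : Prop where
  notP : ∀ x, BT.isP (f (some x)) = false
  regular : NonvanishingOn T m f → Regular T m f

lemma zero_mem_Nset : (0 : ℤ) ∈ Nset T m := mem_Nset.2 (by simp)

lemma not_isU_of_isVV {x : BT k} (h : BT.isVV x = true) : BT.isU x = false := by
  cases x <;> simp_all [BT.isVV, BT.isU]

lemma prec_isU {x y : BT k} (h : prec x y = true) : BT.isU x = true ∧ BT.isU y = true := by
  cases x <;> cases y <;> simp_all [prec, BT.isU]

lemma isVV_of_isV10 {x : BT k} (h : BT.isV10 x = true) : BT.isVV x = true := by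
  cases x <;> simp_all [BT.isV10, BT.isVV]

lemma ne_zero_of_isU {x : BT k} (h : BT.isU x = true) : x ≠ BT.zero := by
  rintro rfl
  simp [BT.isU] at h

lemma Regular.mem_Sset {f : AA T m} (hf : Regular T m f)
    (h : ∀ x, BT.isU (f (some x)) = true) : f ∈ Sset T m := by
  rcases hf with hf | ⟨j, Q, -, rfl⟩
  · exact hf
  · have := h ⟨0, zero_mem_Nset⟩
    rw [not_isU_of_isVV (betaEl_isVV j Q _)] at this
    simp at this

lemma Regular.mem_Lam {f : AA T m} (hf : Regular T m f) (x : {x : ℤ // x ∈ Nset T m})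
    (h : BT.isVV (f (some x)) = true) : f ∈ Lam T m := by
  rcases hf with ⟨n, -, rfl⟩ | hf
  · have := aEl_isU (T := T) (m := m) n (some x)
    rw [not_isU_of_isVV h] at this
    simp at this
  · exact hf

lemma Regular.eq_or_exists {f g : AA T m} (hf : Regular T m f) (hg : Regular T m g)
    (h : ∀ x, f (some x) = g (some x)) :
    (f = g ∧ f ∈ Sset T m) ∨ ∃ Q, InCfgStar T m Q ∧
      (∃ j, f = betaEl T m j Q) ∧ (∃ j, g = betaEl T m j Q) := by
  rcases hf with hS | ⟨j, Q, hQ, rfl⟩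
  · left
    refine ⟨?_, hS⟩
    obtain ⟨n, hn, rfl⟩ := hS
    obtain ⟨n', hn', rfl⟩ := hg.mem_Sset fun x => by rw [← h]; exact aEl_isU n _
    rw [aEl_injective_on hn h]
  · right
    obtain ⟨j', Q', hQ', rfl⟩ := hg.mem_Lam ⟨0, zero_mem_Nset⟩ (by
      rw [← h]; exact betaEl_isVV j Q _)
    obtain rfl := hQ.eq_of_betaEl_eq hQ' h
    exact ⟨Q, hQ, ⟨j, rfl⟩, j', rfl⟩

lemma Regular.of_betaEl {f : AA T m} {Q : Cfg k} (hQ : InCfgStar T m Q) {j j' : Fin 3}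
    (h : ∀ x, f (some x) = betaEl T m j Q (some x)) (h0 : f none = BT.P j') :
    Regular T m f := by
  refine Or.inr ⟨j', Q, hQ, ?_⟩
  funext y
  cases y
  exacts [h0, h _]

lemma meet_P (j j' : Fin 3) : ∃ l, BT.meet (BT.P j : BT k) (BT.P j') = BT.P l := by
  fin_cases j <;> fin_cases j' <;> simp [BT.meet]

lemma T1_P (j j' : Fin 3) : ∃ l, BT.T1 (BT.P j : BT k) (BT.P j') = BT.P l := by
  fin_cases j <;> fin_cases j' <;> simp [BT.T1]

lemma T0_spec {f : AA T m} (hf : Tame T m f)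
    (h : NonvanishingOn T m fun y => BT.T0 (f y)) :
    NonvanishingOn T m f ∧ Regular T m fun y => BT.T0 (f y) := by
  have hf0 : NonvanishingOn T m f := fun x h0 => h x (by simp only [h0]; rfl)
  refine ⟨hf0, ?_⟩
  rcases hf.regular hf0 with ⟨n, hn, rfl⟩ | ⟨j, Q, hQ, rfl⟩
  · exact absurd (by simp [aEl, BT.T0]) (h ⟨n, hn⟩)
  · have hs : Q.state = 0 := by
      by_contra hs
      exact h ⟨Q.pos, hQ.pos_mem⟩ (by simp [betaEl, BT.T0, hs])
    refine Regular.of_betaEl (j := j) (j' := if j = 1 then 0 else 2) hQ (fun x => ?_) ?_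
    · simp only [betaEl, hs]
      split_ifs <;> simp [BT.T0]
    · simp only [betaEl, BT.T0]
      split_ifs <;> rfl

lemma T1_spec {f g : AA T m} (hf : Tame T m f) (hg : Tame T m g)
    (h : NonvanishingOn T m fun y => BT.T1 (f y) (g y)) :
    NonvanishingOn T m f ∧ NonvanishingOn T m g ∧
      Regular T m fun y => BT.T1 (f y) (g y) := by
  have key : ∀ x, f (some x) = g (some x) ∧ BT.isV10 (f (some x)) = true := fun x => by
    have := h x
    simp only [T1_of_notP (hf.notP x) (hg.notP x)] at this
    grind
  have hf0 : NonvanishingOn T m f := fun x =>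
    ne_zero_of_isP_or_isVV (Or.inr (isVV_of_isV10 (key x).2))
  have hg0 : NonvanishingOn T m g := fun x => (key x).1 ▸ hf0 x
  refine ⟨hf0, hg0, ?_⟩
  rcases (hf.regular hf0).eq_or_exists (hg.regular hg0) fun x => (key x).1 with
    ⟨-, n, hn, rfl⟩ | ⟨Q, hQ, ⟨j, rfl⟩, j', rfl⟩
  · have := (key ⟨n, hn⟩).2
    simp [aEl, BT.isV10] at this
  · obtain ⟨l, hl⟩ := T1_P (k := k) j j'
    refine Regular.of_betaEl (j := j) hQ (fun x => ?_) hl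
    rw [T1_of_notP (hf.notP x) (hg.notP x), if_pos (key x)]

lemma meet_spec {f g : AA T m} (hf : Tame T m f) (hg : Tame T m g)
    (h : NonvanishingOn T m fun y => BT.meet (f y) (g y)) :
    NonvanishingOn T m f ∧ NonvanishingOn T m g ∧
      Regular T m fun y => BT.meet (f y) (g y) := by
  have key : ∀ x, f (some x) = g (some x) ∧ f (some x) ≠ BT.zero := fun x => by
    have := h x
    simp only [meet_of_notP (hf.notP x) (hg.notP x)] at this
    grind
  have hf0 : NonvanishingOn T m f := fun x => (key x).2
  have hg0 : NonvanishingOn T m g := fun x => (key x).1 ▸ hf0 x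
  refine ⟨hf0, hg0, ?_⟩
  rcases (hf.regular hf0).eq_or_exists (hg.regular hg0) fun x => (key x).1 with
    ⟨rfl, hS⟩ | ⟨Q, hQ, ⟨j, rfl⟩, j', rfl⟩
  · simpa [BT.meet, Regular] using Or.inl hS
  · obtain ⟨l, hl⟩ := meet_P (k := k) j j'
    refine Regular.of_betaEl (j := j) hQ (fun x => ?_) hl
    rw [meet_of_notP (hf.notP x) (hg.notP x), if_pos (key x).1]

lemma InCfgStar.eq_Q0 (hm : ((cfgStep T)^[m] (Q0 k)).state = 0) {Q : Cfg k}
    (hQ : InCfgStar T m Q) {j : Fin 3}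
    (h : ∀ x, BT.isV10 (betaEl T m j Q (some x)) = true) : Q = Q0 k := by
  have hp := h ⟨Q.pos, hQ.pos_mem⟩
  simp only [betaEl, lt_irrefl, if_false, if_true, BT.isV10] at hp
  simp at hp
  have ht : Q.tape = fun _ => false := by
    funext x
    by_cases hx : x ∈ Nset T m
    · have := h ⟨x, hx⟩
      simp only [betaEl] at this
      split_ifs at this with h1 h2
      · simp [BT.isV10] at this
        tauto
      · rw [h2]
        exact hp.2
      · simp [BT.isV10] at this
        tauto
    · exact hQ.tape_eq_false hx
  have hs : Q = (Q0 k).shift Q.pos := by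
    rcases Q with ⟨t, p, s⟩
    simp_all [Cfg.shift, Q0]
  have h0 : Q.pos = 0 := eq_zero_of_inCfgStar_shift hm (hs ▸ hQ)
  rw [hs, h0]
  simp [Cfg.shift, Q0]

lemma meetI_spec (hm : ((cfgStep T)^[m] (Q0 k)).state = 0) {f g : AA T m} (i : Fin 3)
    (hf : Tame T m f) : ¬ NonvanishingOn T m fun y => BT.meetI i (f y) (g y) := by
  intro h
  have key : ∀ x, BT.isV10 (f (some x)) = true ∧ f (some x) ≠ BT.sel i := fun x => by
    have := h x
    simp only [meetI_of_notP (hf.notP x)] at this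
    grind
  have hf0 : NonvanishingOn T m f := fun x =>
    ne_zero_of_isP_or_isVV (Or.inr (isVV_of_isV10 (key x).1))
  obtain ⟨j, Q, hQ, rfl⟩ := (hf.regular hf0).mem_Lam ⟨0, zero_mem_Nset⟩
    (isVV_of_isV10 (key _).1)
  obtain rfl := hQ.eq_Q0 hm fun x => (key x).1
  fin_cases i
  · exact (key ⟨-1, mem_Nset.2 (by simp)⟩).2 (by simp [betaEl, Q0, BT.sel])
  · exact (key ⟨0, mem_Nset.2 (by simp)⟩).2 (by simp [betaEl, Q0, BT.sel])
  · exact (key ⟨1, mem_Nset.2 (by simp)⟩).2 (by simp [betaEl, Q0, BT.sel])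

lemma barOp_ne {f g : AA T m} (hf : Regular T m f) (hg : Regular T m g)
    {x : {x : ℤ // x ∈ Nset T m}} (h : BT.isVV (g (some x)) = true) :
    f (some x) ≠ BT.barOp (g (some x)) := by
  intro he
  obtain ⟨j', Q', -, rfl⟩ := hg.mem_Lam x h
  obtain ⟨j, Q, -, rfl⟩ := hf.mem_Lam x (by
    rw [he]
    generalize betaEl T m j' Q' (some x) = z at h
    cases z <;> simp_all [BT.isVV, BT.barOp])
  exact barOp_betaEl_ne _ _ _ _ _ he

lemma ne_zero_of_eq_barOp {x y : BT k} (hy : BT.isVV y = true) (h : x = BT.barOp y) :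
    x ≠ BT.zero := by
  subst h
  cases y <;> simp_all [BT.isVV, BT.barOp]

lemma J'_spec {f g h : AA T m} (hf : Tame T m f) (hg : Tame T m g) (hh : Tame T m h)
    (hne : NonvanishingOn T m fun y => BT.J' (f y) (g y) (h y)) :
    NonvanishingOn T m f ∧ NonvanishingOn T m g ∧ NonvanishingOn T m h ∧
      Regular T m fun y => BT.J' (f y) (g y) (h y) := by
  have key : ∀ x, f (some x) ≠ BT.zero ∧ ((f (some x) = g (some x) ∧ f (some x) = h (some x)) ∨
      (BT.isVV (g (some x)) = true ∧ f (some x) = BT.barOp (g (some x)))) := fun x => by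
    have := hne x
    simp only [J'_of_notP (hf.notP x) (hh.notP x)] at this
    grind
  have hf0 : NonvanishingOn T m f := fun x => (key x).1
  have hg0 : NonvanishingOn T m g := fun x => by
    rcases (key x).2 with ⟨h1, -⟩ | ⟨h1, -⟩
    · exact h1 ▸ hf0 x
    · exact ne_zero_of_isP_or_isVV (Or.inr h1)
  have hrf := hf.regular hf0
  have hrg := hg.regular hg0
  have key' : ∀ x, f (some x) = g (some x) ∧ f (some x) = h (some x) := fun x =>
    (key x).2.resolve_right fun hc => barOp_ne hrf hrg hc.1 hc.2
  have hh0 : NonvanishingOn T m h := fun x => (key' x).2 ▸ hf0 x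
  refine ⟨hf0, hg0, hh0, ?_⟩
  have hrh := hh.regular hh0
  rcases hrf.eq_or_exists hrh fun x => (key' x).2 with
    ⟨rfl, hS⟩ | ⟨Q, hQ, ⟨j, rfl⟩, j', rfl⟩
  · rcases hrf.eq_or_exists hrg fun x => (key' x).1 with ⟨rfl, -⟩ | ⟨Q, -, ⟨j, rfl⟩, -⟩
    · simpa [BT.J', BT.meet, Regular] using Or.inl hS
    · obtain ⟨n, hn, he⟩ := hS
      have h2 := betaEl_isVV (T := T) (m := m) j Q ⟨n, hn⟩
      rw [he] at h2
      simp [aEl, BT.isVV] at h2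
  · rcases hrf.eq_or_exists hrg fun x => (key' x).1 with ⟨rfl, -⟩ | ⟨Q', -, -, l, rfl⟩
    · obtain ⟨l, hl⟩ := meet_P (k := k) j j'
      refine Regular.of_betaEl (j := j) (j' := l) hQ (fun x => ?_) ?_
      · rw [J'_of_notP (hf.notP x) (hh.notP x), if_pos (Or.inl (key' x))]
      · simpa [BT.J', betaEl] using hl
    · obtain ⟨l', hl⟩ := meet_P (k := k) j j'
      refine Regular.of_betaEl (j := j) (j' := l') hQ (fun x => ?_) ?_
      · rw [J'_of_notP (hf.notP x) (hh.notP x), if_pos (Or.inl (key' x))]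
      · simpa [BT.J', betaEl, BT.isP] using hl

lemma S1_spec {f g h p : AA T m} (hf : Tame T m f) (hg : Tame T m g) :
    ¬ NonvanishingOn T m fun y => BT.S1 (f y) (g y) (h y) (p y) := by
  intro hne
  have key : ∀ x, f (some x) = BT.one ∨ f (some x) = BT.two := fun x => by
    have := hne x
    simp only [S1_of_notP (hg.notP x)] at this
    grind
  have hU : ∀ x, BT.isU (f (some x)) = true := fun x => by
    rcases key x with h | h <;> rw [h] <;> rfl
  obtain ⟨n, hn, rfl⟩ := (hf.regular fun x => ne_zero_of_isU (hU x)).mem_Sset hU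
  have := key ⟨n, hn⟩
  simp [aEl] at this

lemma S2_spec {f g h p q : AA T m} (hf : Tame T m f) (hg : Tame T m g) (hh : Tame T m h) :
    ¬ NonvanishingOn T m fun y => BT.S2 (f y) (g y) (h y) (p y) (q y) := by
  intro hne
  have key : ∀ x, BT.isVV (g (some x)) = true ∧ f (some x) = BT.barOp (g (some x)) := fun x => by
    have := hne x
    simp only [S2_of_notP (hh.notP x)] at this
    grind
  exact barOp_ne (hf.regular fun x => ne_zero_of_eq_barOp (key x).1 (key x).2)
    (hg.regular fun x => ne_zero_of_isP_or_isVV (Or.inr (key x).1))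
    (key ⟨0, zero_mem_Nset⟩).1 (key _).2

lemma mop_spec (hm : ((cfgStep T)^[m] (Q0 k)).state = 0) {f g h : AA T m}
    (hf : Tame T m f) (hg : Tame T m g) (hh : Tame T m h) {i : Fin (k + 1)} (hi : i ≠ 0)
    {r t b : Bool} (hne : NonvanishingOn T m fun y => mop T i r t b (f y) (g y) (h y)) :
    NonvanishingOn T m f ∧ NonvanishingOn T m g ∧ NonvanishingOn T m h ∧
      Regular T m fun y => mop T i r t b (f y) (g y) (h y) := by
  have hp : ∀ x, prec (f (some x)) (g (some x)) = true := fun x => (mop_ne_zero (hne x)).1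
  have hv : ∀ x, BT.isVV (h (some x)) = true := fun x =>
    (mop_ne_zero (hne x)).2.resolve_left (by simp [hh.notP x])
  have hf0 : NonvanishingOn T m f := fun x => ne_zero_of_isU (prec_isU (hp x)).1
  have hg0 : NonvanishingOn T m g := fun x => ne_zero_of_isU (prec_isU (hp x)).2
  have hh0 : NonvanishingOn T m h := fun x => ne_zero_of_isP_or_isVV (Or.inr (hv x))
  refine ⟨hf0, hg0, hh0, ?_⟩
  obtain ⟨n, hn, rfl⟩ := (hf.regular hf0).mem_Sset fun x => (prec_isU (hp x)).1
  obtain ⟨n', hn', rfl⟩ := (hg.regular hg0).mem_Sset fun x => (prec_isU (hp x)).2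
  obtain ⟨j, Q, hQ, rfl⟩ := (hh.regular hh0).mem_Lam ⟨0, zero_mem_Nset⟩ (hv _)
  obtain rfl := eq_add_one_of_prec hn hn' hp
  cases b
  · obtain ⟨rfl, rfl, rfl, rfl⟩ := fwd_betaEl_inv hi hn hn' hne
    exact Or.inr ⟨j, cfgStep T Q, hQ.step hm hi, funext fun y => fwd_betaEl hi j y⟩
  · obtain ⟨Q', rfl, hQ', rfl, rfl, rfl, rfl⟩ := revOp_betaEl_inv hi hn hn' hne
    exact Or.inr ⟨j, Q', hQ.of_step hQ', funext fun y => revOp_betaEl hi j y⟩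

lemma U1op_spec (hm : ((cfgStep T)^[m] (Q0 k)).state = 0) {f g h p : AA T m}
    (hf : Tame T m f) (hg : Tame T m g) (hh : Tame T m h) (hp : Tame T m p)
    {i : Fin (k + 1)} (hi : i ≠ 0) {r t b : Bool}
    (hne : NonvanishingOn T m fun y => U1op (mop T i r t b) (f y) (g y) (h y) (p y)) :
    NonvanishingOn T m f ∧ NonvanishingOn T m g ∧ NonvanishingOn T m h ∧
      NonvanishingOn T m p ∧
      Regular T m fun y => U1op (mop T i r t b) (f y) (g y) (h y) (p y) := by
  have key : ∀ x, prec (f (some x)) (g (some x)) = true ∧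
      prec (f (some x)) (h (some x)) = true := fun x => by
    have := hne x
    simp only [U1op] at this
    grind
  have hf0 : NonvanishingOn T m f := fun x => ne_zero_of_isU (prec_isU (key x).1).1
  have hg0 : NonvanishingOn T m g := fun x => ne_zero_of_isU (prec_isU (key x).1).2
  have hh0 : NonvanishingOn T m h := fun x => ne_zero_of_isU (prec_isU (key x).2).2
  obtain ⟨n, hn, rfl⟩ := (hf.regular hf0).mem_Sset fun x => (prec_isU (key x).1).1
  obtain ⟨n', hn', rfl⟩ := (hg.regular hg0).mem_Sset fun x => (prec_isU (key x).1).2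
  obtain ⟨n'', hn'', rfl⟩ := (hh.regular hh0).mem_Sset fun x => (prec_isU (key x).2).2
  obtain rfl := eq_add_one_of_prec hn hn' fun x => (key x).1
  obtain rfl := eq_add_one_of_prec hn hn'' fun x => (key x).2
  have he : (fun y => U1op (mop T i r t b) (aEl T m n y) (aEl T m (n + 1) y)
      (aEl T m (n + 1) y) (p y)) =
      fun y => mop T i r t b (aEl T m n y) (aEl T m (n + 1) y) (p y) := by
    funext y
    rcases y with _ | x
    · simp [U1op, aEl, prec]
    · simp [U1op, (key x).1]
  rw [he] at hne ⊢
  obtain ⟨-, -, hp0, hr⟩ := mop_spec hm hf hg hp hi hne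
  exact ⟨hf0, hg0, hh0, hp0, hr⟩

lemma U2op_spec (hm : ((cfgStep T)^[m] (Q0 k)).state = 0) {f g h p : AA T m}
    (hf : Tame T m f) (hg : Tame T m g) (hh : Tame T m h) (hp : Tame T m p)
    {i : Fin (k + 1)} (hi : i ≠ 0) {r t b : Bool}
    (hne : NonvanishingOn T m fun y => U2op (mop T i r t b) (f y) (g y) (h y) (p y)) :
    NonvanishingOn T m f ∧ NonvanishingOn T m g ∧ NonvanishingOn T m h ∧
      NonvanishingOn T m p ∧
      Regular T m fun y => U2op (mop T i r t b) (f y) (g y) (h y) (p y) := by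
  have key : ∀ x, prec (f (some x)) (h (some x)) = true ∧
      prec (g (some x)) (h (some x)) = true := fun x => by
    have := hne x
    simp only [U2op] at this
    grind
  have hf0 : NonvanishingOn T m f := fun x => ne_zero_of_isU (prec_isU (key x).1).1
  have hg0 : NonvanishingOn T m g := fun x => ne_zero_of_isU (prec_isU (key x).2).1
  have hh0 : NonvanishingOn T m h := fun x => ne_zero_of_isU (prec_isU (key x).2).2
  obtain ⟨n, hn, rfl⟩ := (hf.regular hf0).mem_Sset fun x => (prec_isU (key x).1).1
  obtain ⟨n', hn', rfl⟩ := (hg.regular hg0).mem_Sset fun x => (prec_isU (key x).2).1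
  obtain ⟨n'', hn'', rfl⟩ := (hh.regular hh0).mem_Sset fun x => (prec_isU (key x).2).2
  obtain rfl := eq_add_one_of_prec hn hn'' fun x => (key x).1
  obtain rfl : n = n' := by
    have := eq_add_one_of_prec hn' hn'' fun x => (key x).2
    omega
  have he : (fun y => U2op (mop T i r t b) (aEl T m n y) (aEl T m n y)
      (aEl T m (n + 1) y) (p y)) =
      fun y => mop T i r t b (aEl T m n y) (aEl T m (n + 1) y) (p y) := by
    funext y
    rcases y with _ | x
    · simp [U2op, aEl, prec]
    · simp [U2op, (key x).1]
  rw [he] at hne ⊢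
  obtain ⟨-, -, hp0, hr⟩ := mop_spec hm hf hh hp hi hne
  exact ⟨hf0, hg0, hh0, hp0, hr⟩

lemma InK.tame (hm : ((cfgStep T)^[m] (Q0 k)).state = 0) {f : AA T m} (hf : InK T m f) :
    Tame T m f := by
  induction hf with
  | gen_a n hn =>
    refine ⟨fun x => ?_, fun _ => Or.inl ⟨n, hn, rfl⟩⟩
    simp only [aEl]
    split_ifs <;> rfl
  | gen_q j =>
    refine ⟨fun x => ?_, fun _ => Or.inr ⟨j, _, inCfgStar_Q0, qEl_eq_betaEl j⟩⟩
    simp only [qEl]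
    split_ifs <;> rfl
  | zeroOp => exact ⟨fun _ => rfl, fun h => absurd rfl (h ⟨0, zero_mem_Nset⟩)⟩
  | t0 _ hf => exact ⟨fun x => T0_notP (hf.notP x), fun h => (T0_spec hf h).2⟩
  | t1 _ _ hf hg =>
    refine ⟨fun x => ?_, fun h => (T1_spec hf hg h).2.2⟩
    rw [T1_of_notP (hf.notP x) (hg.notP x)]
    exact ite_notP (hf.notP x)
  | meet _ _ hf hg =>
    refine ⟨fun x => ?_, fun h => (meet_spec hf hg h).2.2⟩
    rw [meet_of_notP (hf.notP x) (hg.notP x)]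
    exact ite_notP (hf.notP x)
  | meetI i _ _ hf hg =>
    refine ⟨fun x => ?_, fun h => absurd h (meetI_spec hm i hf)⟩
    rw [meetI_of_notP (hf.notP x)]
    exact ite_notP (hf.notP x)
  | jop _ _ _ hf hg hh =>
    refine ⟨fun x => ?_, fun h => (J'_spec hf hg hh h).2.2.2⟩
    rw [J'_of_notP (hf.notP x) (hh.notP x)]
    exact ite_notP (hf.notP x)
  | s1 _ _ _ _ hf hg hh hp =>
    refine ⟨fun x => ?_, fun h => absurd h (S1_spec hf hg)⟩
    rw [S1_of_notP (hg.notP x)]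
    exact ite_notP (hg.notP x)
  | s2 _ _ _ _ _ hf hg hh hp hq =>
    refine ⟨fun x => ?_, fun h => absurd h (S2_spec hf hg hh)⟩
    rw [S2_of_notP (hh.notP x)]
    exact ite_notP (hh.notP x)
  | mach i hi r t b _ _ _ hf hg hh =>
    exact ⟨fun x => mop_notP (hh.notP x), fun h => (mop_spec hm hf hg hh hi h).2.2.2⟩
  | u1 i hi r t b _ _ _ _ hf hg hh hp =>
    exact ⟨fun x => U1op_notP (hp.notP x), fun h => (U1op_spec hm hf hg hh hp hi h).2.2.2.2⟩
  | u2 i hi r t b _ _ _ _ hf hg hh hp =>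
    exact ⟨fun x => U2op_notP (hp.notP x), fun h => (U2op_spec hm hf hg hh hp hi h).2.2.2.2⟩

end Regular

section Polynomials

variable {k : ℕ} {T : TM k} {m n : ℕ}

lemma PolyK.inK {p : (Fin n → AA T m) → AA T m} (hp : PolyK T m p) :
    ∀ {v : Fin n → AA T m}, (∀ i, InK T m (v i)) → InK T m (p v) := by
  induction hp with
  | proj i => exact fun hv => hv i
  | const c hc => exact fun _ => hc
  | zeroOp => exact fun _ => .zeroOp
  | t0 _ h1 => exact fun hv => .t0 (h1 hv)
  | t1 _ _ h1 h2 => exact fun hv => .t1 (h1 hv) (h2 hv)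
  | meet _ _ h1 h2 => exact fun hv => .meet (h1 hv) (h2 hv)
  | meetI j _ _ h1 h2 => exact fun hv => .meetI j (h1 hv) (h2 hv)
  | jop _ _ _ h1 h2 h3 => exact fun hv => .jop (h1 hv) (h2 hv) (h3 hv)
  | s1 _ _ _ _ h1 h2 h3 h4 => exact fun hv => .s1 (h1 hv) (h2 hv) (h3 hv) (h4 hv)
  | s2 _ _ _ _ _ h1 h2 h3 h4 h5 =>
    exact fun hv => .s2 (h1 hv) (h2 hv) (h3 hv) (h4 hv) (h5 hv)
  | mach i hi r t b _ _ _ h1 h2 h3 =>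
    exact fun hv => .mach i hi r t b (h1 hv) (h2 hv) (h3 hv)
  | u1 i hi r t b _ _ _ _ h1 h2 h3 h4 =>
    exact fun hv => .u1 i hi r t b (h1 hv) (h2 hv) (h3 hv) (h4 hv)
  | u2 i hi r t b _ _ _ _ h1 h2 h3 h4 =>
    exact fun hv => .u2 i hi r t b (h1 hv) (h2 hv) (h3 hv) (h4 hv)

lemma PolyK.congr_apply {p : (Fin n → AA T m) → AA T m} (hp : PolyK T m p)
    {y : Option {x : ℤ // x ∈ Nset T m}} :
    ∀ {v w : Fin n → AA T m}, (∀ i, v i y = w i y) → p v y = p w y := by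
  induction hp with
  | proj i => exact fun h => h i
  | const c hc => exact fun _ => rfl
  | zeroOp => exact fun _ => rfl
  | t0 _ h1 => intro v w h; simp only [h1 h]
  | t1 _ _ h1 h2 => intro v w h; simp only [h1 h, h2 h]
  | meet _ _ h1 h2 => intro v w h; simp only [h1 h, h2 h]
  | meetI j _ _ h1 h2 => intro v w h; simp only [h1 h, h2 h]
  | jop _ _ _ h1 h2 h3 => intro v w h; simp only [h1 h, h2 h, h3 h]
  | s1 _ _ _ _ h1 h2 h3 h4 => intro v w h; simp only [h1 h, h2 h, h3 h, h4 h]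
  | s2 _ _ _ _ _ h1 h2 h3 h4 h5 => intro v w h; simp only [h1 h, h2 h, h3 h, h4 h, h5 h]
  | mach i hi r t b _ _ _ h1 h2 h3 => intro v w h; simp only [h1 h, h2 h, h3 h]
  | u1 i hi r t b _ _ _ _ h1 h2 h3 h4 => intro v w h; simp only [h1 h, h2 h, h3 h, h4 h]
  | u2 i hi r t b _ _ _ _ h1 h2 h3 h4 => intro v w h; simp only [h1 h, h2 h, h3 h, h4 h]

lemma PolyK.comp {l : ℕ} {p : (Fin n → AA T m) → AA T m} (hp : PolyK T m p) :
    ∀ {σ : Fin n → (Fin l → AA T m) → AA T m}, (∀ i, PolyK T m (σ i)) →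
      PolyK T m fun v => p fun i => σ i v := by
  induction hp with
  | proj i => exact fun hv => hv i
  | const c hc => exact fun _ => .const c hc
  | zeroOp => exact fun _ => .zeroOp
  | t0 _ h1 => exact fun hv => .t0 (h1 hv)
  | t1 _ _ h1 h2 => exact fun hv => .t1 (h1 hv) (h2 hv)
  | meet _ _ h1 h2 => exact fun hv => .meet (h1 hv) (h2 hv)
  | meetI j _ _ h1 h2 => exact fun hv => .meetI j (h1 hv) (h2 hv)
  | jop _ _ _ h1 h2 h3 => exact fun hv => .jop (h1 hv) (h2 hv) (h3 hv)
  | s1 _ _ _ _ h1 h2 h3 h4 => exact fun hv => .s1 (h1 hv) (h2 hv) (h3 hv) (h4 hv)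
  | s2 _ _ _ _ _ h1 h2 h3 h4 h5 =>
    exact fun hv => .s2 (h1 hv) (h2 hv) (h3 hv) (h4 hv) (h5 hv)
  | mach i hi r t b _ _ _ h1 h2 h3 =>
    exact fun hv => .mach i hi r t b (h1 hv) (h2 hv) (h3 hv)
  | u1 i hi r t b _ _ _ _ h1 h2 h3 h4 =>
    exact fun hv => .u1 i hi r t b (h1 hv) (h2 hv) (h3 hv) (h4 hv)
  | u2 i hi r t b _ _ _ _ h1 h2 h3 h4 =>
    exact fun hv => .u2 i hi r t b (h1 hv) (h2 hv) (h3 hv) (h4 hv)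

/-- A polynomial taking a value outside `K₀` at arguments from `K₀` is constant. -/
lemma PolyK.eq_of_nonvanishingOn (hm : ((cfgStep T)^[m] (Q0 k)).state = 0)
    {p : (Fin n → AA T m) → AA T m} (hp : PolyK T m p) :
    ∀ {v : Fin n → AA T m}, (∀ i, InK T m (v i)) → (∀ i, ¬ NonvanishingOn T m (v i)) →
      NonvanishingOn T m (p v) → ∀ w, p w = p v := by
  induction hp with
  | proj i => exact fun _ h0 h => absurd h (h0 i)
  | const c hc => exact fun _ _ _ _ => rfl
  | zeroOp => exact fun _ _ _ _ => rfl
  | t0 p1 h1 =>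
    intro v hv h0 h w
    obtain ⟨n1, -⟩ := T0_spec ((p1.inK hv).tame hm) h
    simp only [h1 hv h0 n1 w]
  | t1 p1 p2 h1 h2 =>
    intro v hv h0 h w
    obtain ⟨n1, n2, -⟩ := T1_spec ((p1.inK hv).tame hm) ((p2.inK hv).tame hm) h
    simp only [h1 hv h0 n1 w, h2 hv h0 n2 w]
  | meet p1 p2 h1 h2 =>
    intro v hv h0 h w
    obtain ⟨n1, n2, -⟩ := meet_spec ((p1.inK hv).tame hm) ((p2.inK hv).tame hm) h
    simp only [h1 hv h0 n1 w, h2 hv h0 n2 w]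
  | meetI j p1 _ _ _ =>
    exact fun hv _ h => absurd h (meetI_spec hm j ((p1.inK hv).tame hm))
  | jop p1 p2 p3 h1 h2 h3 =>
    intro v hv h0 h w
    obtain ⟨n1, n2, n3, -⟩ := J'_spec ((p1.inK hv).tame hm) ((p2.inK hv).tame hm)
      ((p3.inK hv).tame hm) h
    simp only [h1 hv h0 n1 w, h2 hv h0 n2 w, h3 hv h0 n3 w]
  | s1 p1 p2 _ _ _ _ _ _ =>
    exact fun hv _ h => absurd h (S1_spec ((p1.inK hv).tame hm) ((p2.inK hv).tame hm))
  | s2 p1 p2 p3 _ _ _ _ _ _ _ =>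
    exact fun hv _ h => absurd h (S2_spec ((p1.inK hv).tame hm) ((p2.inK hv).tame hm)
      ((p3.inK hv).tame hm))
  | mach i hi r t b p1 p2 p3 h1 h2 h3 =>
    intro v hv h0 h w
    obtain ⟨n1, n2, n3, -⟩ := mop_spec hm ((p1.inK hv).tame hm) ((p2.inK hv).tame hm)
      ((p3.inK hv).tame hm) hi h
    simp only [h1 hv h0 n1 w, h2 hv h0 n2 w, h3 hv h0 n3 w]
  | u1 i hi r t b p1 p2 p3 p4 h1 h2 h3 h4 =>
    intro v hv h0 h w
    obtain ⟨n1, n2, n3, n4, -⟩ := U1op_spec hm ((p1.inK hv).tame hm) ((p2.inK hv).tame hm)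
      ((p3.inK hv).tame hm) ((p4.inK hv).tame hm) hi h
    simp only [h1 hv h0 n1 w, h2 hv h0 n2 w, h3 hv h0 n3 w, h4 hv h0 n4 w]
  | u2 i hi r t b p1 p2 p3 p4 h1 h2 h3 h4 =>
    intro v hv h0 h w
    obtain ⟨n1, n2, n3, n4, -⟩ := U2op_spec hm ((p1.inK hv).tame hm) ((p2.inK hv).tame hm)
      ((p3.inK hv).tame hm) ((p4.inK hv).tame hm) hi h
    simp only [h1 hv h0 n1 w, h2 hv h0 n2 w, h3 hv h0 n3 w, h4 hv h0 n4 w]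

end Polynomials

section Theta

variable {k : ℕ} {T : TM k} {m : ℕ} {f g h : AA T m}

lemma theta.symm (hfg : theta T m f g) : theta T m g f :=
  ⟨hfg.2.1, hfg.1, fun F hF => (hfg.2.2 F hF).symm⟩

lemma theta.trans (hfg : theta T m f g) (hgh : theta T m g h) : theta T m f h :=
  ⟨hfg.1, hgh.2.1, fun F hF => (hfg.2.2 F hF).trans (hgh.2.2 F hF)⟩

lemma theta.map (hfg : theta T m f g) {F : AA T m → AA T m} (hF : UPolyK T m F) :
    theta T m (F f) (F g) :=
  ⟨hF.inK (v := fun _ => f) fun _ => hfg.1, hF.inK (v := fun _ => g) fun _ => hfg.2.1,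
    fun G hG => hfg.2.2 (fun x => G (F x)) (PolyK.comp hG fun _ => hF)⟩

lemma qEl_ne_zero (j : Fin 3) (y : Option {x : ℤ // x ∈ Nset T m}) :
    qEl T m j y ≠ BT.zero := by
  rw [qEl_eq_betaEl]
  exact betaEl_ne_zero _ _ _

lemma theta_of_vanishing (hm : ((cfgStep T)^[m] (Q0 k)).state = 0) (hf : InK T m f)
    (hg : InK T m g) (hf0 : ¬ NonvanishingOn T m f) (hg0 : ¬ NonvanishingOn T m g) :
    theta T m f g := by
  have key : ∀ {f g : AA T m}, InK T m f → ¬ NonvanishingOn T m f →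
      ∀ F, UPolyK T m F → F f = qEl T m 2 → F g = qEl T m 2 := fun {f g} hf hf0 F hF h =>
    (hF.eq_of_nonvanishingOn hm (v := fun _ => f) (fun _ => hf) (fun _ => hf0)
      (fun x => by simp only [h]; exact qEl_ne_zero 2 _) fun _ => g).trans h
  exact ⟨hf, hg, fun F hF => ⟨key hf hf0 F hF, key hg hg0 F hF⟩⟩

lemma leftPos_mem {Q : Cfg k} (hQ : InCfgStar T m Q) (hQ' : InCfgStar T m (cfgStep T Q)) :
    leftPos T Q ∈ Nset T m := by
  rcases min_choice Q.pos (cfgStep T Q).pos with h | h <;> rw [leftPos, h]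
  exacts [hQ.pos_mem, hQ'.pos_mem]

lemma leftPos_add_one_mem {Q : Cfg k} (hs : Q.state ≠ 0) (hQ : InCfgStar T m Q)
    (hQ' : InCfgStar T m (cfgStep T Q)) : leftPos T Q + 1 ∈ Nset T m := by
  have h : leftPos T Q + 1 = max Q.pos (cfgStep T Q).pos := by
    rw [leftPos, cfgStep_of_state_ne_zero hs]
    dsimp only
    split <;> simp
  rcases max_choice Q.pos (cfgStep T Q).pos with h' | h' <;> rw [h, h']
  exacts [hQ.pos_mem, hQ'.pos_mem]

/-- The polynomial of `K` carrying `β^j(Q)` to `β^j` of the next configuration, or back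
if `b = true`. -/
noncomputable def stepPoly (T : TM k) (m : ℕ) (Q : Cfg k) (b : Bool) (f : AA T m) : AA T m :=
  fun y => mop T Q.state (Q.tape Q.pos) ((cfgStep T Q).tape (cfgStep T Q).pos) b
    (aEl T m (leftPos T Q) y) (aEl T m (leftPos T Q + 1) y) (f y)

lemma uPolyK_stepPoly {Q : Cfg k} (hs : Q.state ≠ 0) (hQ : InCfgStar T m Q)
    (hQ' : InCfgStar T m (cfgStep T Q)) (b : Bool) : UPolyK T m (stepPoly T m Q b) :=
  PolyK.mach Q.state hs _ _ b (.const _ (.gen_a _ (leftPos_mem hQ hQ')))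
    (.const _ (.gen_a _ (leftPos_add_one_mem hs hQ hQ'))) (.proj 0)

lemma stepPoly_false {Q : Cfg k} (hs : Q.state ≠ 0) (j : Fin 3) :
    stepPoly T m Q false (betaEl T m j Q) = betaEl T m j (cfgStep T Q) :=
  funext fun y => fwd_betaEl hs j y

lemma stepPoly_true {Q : Cfg k} (hs : Q.state ≠ 0) (j : Fin 3) :
    stepPoly T m Q true (betaEl T m j (cfgStep T Q)) = betaEl T m j Q :=
  funext fun y => revOp_betaEl hs j y

lemma eq_of_stepPoly_false {Q : Cfg k} (hs : Q.state ≠ 0) {j : Fin 3}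
    (hf : stepPoly T m Q false f = betaEl T m j (cfgStep T Q)) : f = betaEl T m j Q := by
  funext y
  have h1 := (congrFun hf y).trans (fwd_betaEl hs j y).symm
  refine fwd_inj ?_ h1
  have := congrFun hf y
  simp only [stepPoly, mop] at this
  rw [this]
  exact betaEl_ne_zero _ _ _

lemma eq_of_stepPoly_true {Q : Cfg k} (hs : Q.state ≠ 0) {j : Fin 3}
    (hf : stepPoly T m Q true f = betaEl T m j Q) : f = betaEl T m j (cfgStep T Q) := by
  funext y
  have h1 := congrFun hf y
  simp only [stepPoly, mop] at h1
  have h2 := (fwd_revOp (by rw [h1]; exact betaEl_ne_zero _ _ _)).2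
  rw [h1, fwd_betaEl hs j y] at h2
  exact h2.symm

lemma IsCongK.map_stepPoly {R : AA T m → AA T m → Prop} (hR : IsCongK T m R) {Q : Cfg k}
    (hs : Q.state ≠ 0) (hQ : InCfgStar T m Q) (hQ' : InCfgStar T m (cfgStep T Q)) (b : Bool)
    (hfg : R f g) : R (stepPoly T m Q b f) (stepPoly T m Q b g) :=
  hR.mach Q.state hs _ _ b (hR.refl _ (.gen_a _ (leftPos_mem hQ hQ')))
    (hR.refl _ (.gen_a _ (leftPos_add_one_mem hs hQ hQ'))) hfg

lemma T1_qEl_zero : (fun y => BT.T1 (qEl T m 0 y) (qEl T m 0 y)) = qEl T m 1 := by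
  funext y
  rcases y with _ | x
  · simp [qEl, BT.T1]
  · simp only [qEl]
    split_ifs <;> simp [BT.T1, BT.isV10]

lemma T1_qEl_two : (fun y => BT.T1 (qEl T m 2 y) (qEl T m 2 y)) = qEl T m 2 := by
  funext y
  rcases y with _ | x
  · simp [qEl, BT.T1]
  · simp only [qEl]
    split_ifs <;> simp [BT.T1, BT.isV10]

lemma IsCongK.rel_betaEl (hm : ((cfgStep T)^[m] (Q0 k)).state = 0)
    {R : AA T m → AA T m → Prop} (hR : IsCongK T m R) (h02 : R (qEl T m 0) (qEl T m 2))
    {Q : Cfg k} (hQ : InCfgStar T m Q) :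
    ∀ j j', R (betaEl T m j Q) (betaEl T m j' Q) := by
  refine InCfgStar.induction hm (p := fun Q => ∀ j j', R (betaEl T m j Q) (betaEl T m j' Q))
    ?_ (fun Q hQ hs hQ' => ⟨fun h j j' => ?_, fun h j j' => ?_⟩) hQ
  · have h12 : R (qEl T m 1) (qEl T m 2) := by
      have := hR.t1 h02 h02
      rwa [T1_qEl_zero, T1_qEl_two] at this
    have h2 : ∀ j, R (qEl T m j) (qEl T m 2) := fun j => by
      fin_cases j
      exacts [h02, h12, hR.refl _ (.gen_q 2)]
    intro j j'
    rw [← qEl_eq_betaEl, ← qEl_eq_betaEl]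
    exact hR.trans (h2 j) (hR.symm (h2 j'))
  · rw [← stepPoly_false hs, ← stepPoly_false hs]
    exact hR.map_stepPoly hs hQ hQ' false (h j j')
  · rw [← stepPoly_true hs, ← stepPoly_true hs]
    exact hR.map_stepPoly hs hQ hQ' true (h j j')

lemma theta.exists_eq_betaEl (hm : ((cfgStep T)^[m] (Q0 k)).state = 0) {Q : Cfg k}
    (hQ : InCfgStar T m Q) : ∀ {f : AA T m} {j : Fin 3}, theta T m f (betaEl T m j Q) →
      ∃ j', f = betaEl T m j' Q := by
  refine InCfgStar.induction hm (p := fun Q => ∀ {f : AA T m} {j : Fin 3},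
    theta T m f (betaEl T m j Q) → ∃ j', f = betaEl T m j' Q)
    ?_ (fun Q hQ hs hQ' => ⟨fun ih f j h => ?_, fun ih f j h => ?_⟩) hQ
  · intro f j h
    rw [← qEl_eq_betaEl] at h
    have hq : (fun y => BT.meet (qEl T m j y) (qEl T m 2 y)) = qEl T m 2 := by
      funext y
      rcases y with _ | x
      · fin_cases j <;> simp [qEl, BT.meet]
      · simp [qEl, BT.meet]
    have he := (h.2.2 (fun x y => BT.meet (x y) (qEl T m 2 y))
      (.meet (.proj 0) (.const _ (.gen_q 2)))).2 hq
    have hf := h.1.tame hm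
    have ht := (InK.gen_q (T := T) (m := m) 2).tame hm
    obtain ⟨hf0, hq0, -⟩ := meet_spec hf ht fun x => by rw [he]; exact qEl_ne_zero 2 _
    have hfq : ∀ x, f (some x) = qEl T m 2 (some x) := fun x => by
      have h1 := congrFun he (some x)
      have h2 := qEl_ne_zero (T := T) (m := m) 2 (some x)
      simp only [meet_of_notP (hf.notP x) (ht.notP x)] at h1
      grind
    rcases (hf.regular hf0).eq_or_exists (ht.regular hq0) hfq with
      ⟨h1, -⟩ | ⟨Q, hQ, ⟨l, rfl⟩, l', hl'⟩
    · exact ⟨2, h1.trans (qEl_eq_betaEl 2)⟩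
    · rw [qEl_eq_betaEl] at hl'
      rw [hQ.eq_of_betaEl_eq inCfgStar_Q0 fun x => (congrFun hl' (some x)).symm]
      exact ⟨l, rfl⟩
  · have h1 := h.map (uPolyK_stepPoly hs hQ hQ' true)
    rw [stepPoly_true hs] at h1
    obtain ⟨j', hj'⟩ := ih h1
    exact ⟨j', eq_of_stepPoly_true hs hj'⟩
  · have h1 := h.map (uPolyK_stepPoly hs hQ hQ' false)
    rw [stepPoly_false hs] at h1
    obtain ⟨j', hj'⟩ := ih h1
    exact ⟨j', eq_of_stepPoly_false hs hj'⟩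

/-- The relation shown to be equal to `thetaBar`. -/
def BlockRel (T : TM k) (m : ℕ) (f g : AA T m) : Prop :=
  InK T m f ∧ InK T m g ∧ (theta T m f g ∨ ∃ Q : Cfg k, InCfgStar T m Q ∧
    (∃ j : Fin 3, f = betaEl T m j Q) ∧ (∃ j : Fin 3, g = betaEl T m j Q))

lemma BlockRel.refl (hf : InK T m f) : BlockRel T m f f :=
  ⟨hf, hf, Or.inl ⟨hf, hf, fun _ _ => Iff.rfl⟩⟩

lemma BlockRel.symm (hfg : BlockRel T m f g) : BlockRel T m g f := by
  obtain ⟨hf, hg, h | ⟨Q, hQ, h1, h2⟩⟩ := hfg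
  · exact ⟨hg, hf, Or.inl h.symm⟩
  · exact ⟨hg, hf, Or.inr ⟨Q, hQ, h2, h1⟩⟩

lemma BlockRel.trans (hm : ((cfgStep T)^[m] (Q0 k)).state = 0) (hfg : BlockRel T m f g)
    (hgh : BlockRel T m g h) : BlockRel T m f h := by
  obtain ⟨hf, -, h1⟩ := hfg
  obtain ⟨-, hh, h2⟩ := hgh
  refine ⟨hf, hh, ?_⟩
  rcases h1 with h1 | ⟨Q, hQ, h1, j, rfl⟩
  · rcases h2 with h2 | ⟨Q, hQ, ⟨j, rfl⟩, h2⟩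
    · exact Or.inl (h1.trans h2)
    · exact Or.inr ⟨Q, hQ, h1.exists_eq_betaEl hm hQ, h2⟩
  · rcases h2 with h2 | ⟨Q', hQ', ⟨j', h2⟩, h3⟩
    · exact Or.inr ⟨Q, hQ, h1, h2.symm.exists_eq_betaEl hm hQ⟩
    · obtain rfl := hQ.eq_of_betaEl_eq hQ' fun x => congrFun h2 (some x)
      exact Or.inr ⟨Q, hQ, h1, h3⟩

lemma BlockRel.map (hm : ((cfgStep T)^[m] (Q0 k)).state = 0) (hfg : BlockRel T m f g)
    {F : AA T m → AA T m} (hF : UPolyK T m F) : BlockRel T m (F f) (F g) := by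
  obtain ⟨hf, hg, h⟩ := hfg
  have hFf : InK T m (F f) := hF.inK (v := fun _ => f) fun _ => hf
  have hFg : InK T m (F g) := hF.inK (v := fun _ => g) fun _ => hg
  refine ⟨hFf, hFg, ?_⟩
  rcases h with h | ⟨Q, hQ, ⟨j, rfl⟩, j', rfl⟩
  · exact Or.inl (h.map hF)
  · have he : ∀ x, F (betaEl T m j Q) (some x) = F (betaEl T m j' Q) (some x) := fun x =>
      hF.congr_apply (v := fun _ => betaEl T m j Q) (w := fun _ => betaEl T m j' Q) fun _ => rfl
    by_cases h0 : NonvanishingOn T m (F (betaEl T m j Q))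
    · have h0' : NonvanishingOn T m (F (betaEl T m j' Q)) := fun x => he x ▸ h0 x
      rcases ((hFf.tame hm).regular h0).eq_or_exists ((hFg.tame hm).regular h0') he with
        ⟨h1, -⟩ | h1
      · exact Or.inl ⟨hFf, hFg, fun _ _ => by rw [h1]⟩
      · exact Or.inr h1
    · exact Or.inl (theta_of_vanishing hm hFf hFg h0 fun h0' => h0 fun x => he x ▸ h0' x)

lemma isCongK_blockRel (hm : ((cfgStep T)^[m] (Q0 k)).state = 0) :
    IsCongK T m (BlockRel T m) where
  refl _ hf := .refl hf
  symm hfg := hfg.symm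
  trans hfg hgh := hfg.trans hm hgh
  dom hfg := ⟨hfg.1, hfg.2.1⟩
  t0 h1 := h1.map hm (F := fun x y => BT.T0 (x y)) (.t0 (.proj 0))
  t1 {_ f' g _} h1 h2 :=
    (h1.map hm (F := fun x y => BT.T1 (x y) (g y)) (.t1 (.proj 0) (.const _ h2.1))).trans hm
      (h2.map hm (F := fun x y => BT.T1 (f' y) (x y)) (.t1 (.const _ h1.2.1) (.proj 0)))
  meet {_ f' g _} h1 h2 :=
    (h1.map hm (F := fun x y => BT.meet (x y) (g y)) (.meet (.proj 0) (.const _ h2.1))).trans hm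
      (h2.map hm (F := fun x y => BT.meet (f' y) (x y)) (.meet (.const _ h1.2.1) (.proj 0)))
  meetI i {_ f' g _} h1 h2 :=
    (h1.map hm (F := fun x y => BT.meetI i (x y) (g y))
      (.meetI i (.proj 0) (.const _ h2.1))).trans hm
      (h2.map hm (F := fun x y => BT.meetI i (f' y) (x y))
        (.meetI i (.const _ h1.2.1) (.proj 0)))
  jop {_ f' g g' h _} h1 h2 h3 :=
    ((h1.map hm (F := fun x y => BT.J' (x y) (g y) (h y))
      (.jop (.proj 0) (.const _ h2.1) (.const _ h3.1))).trans hm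
      (h2.map hm (F := fun x y => BT.J' (f' y) (x y) (h y))
        (.jop (.const _ h1.2.1) (.proj 0) (.const _ h3.1)))).trans hm
      (h3.map hm (F := fun x y => BT.J' (f' y) (g' y) (x y))
        (.jop (.const _ h1.2.1) (.const _ h2.2.1) (.proj 0)))
  s1 {_ f' g g' h h' p _} h1 h2 h3 h4 :=
    (((h1.map hm (F := fun x y => BT.S1 (x y) (g y) (h y) (p y))
      (.s1 (.proj 0) (.const _ h2.1) (.const _ h3.1) (.const _ h4.1))).trans hm
      (h2.map hm (F := fun x y => BT.S1 (f' y) (x y) (h y) (p y))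
        (.s1 (.const _ h1.2.1) (.proj 0) (.const _ h3.1) (.const _ h4.1)))).trans hm
      (h3.map hm (F := fun x y => BT.S1 (f' y) (g' y) (x y) (p y))
        (.s1 (.const _ h1.2.1) (.const _ h2.2.1) (.proj 0) (.const _ h4.1)))).trans hm
      (h4.map hm (F := fun x y => BT.S1 (f' y) (g' y) (h' y) (x y))
        (.s1 (.const _ h1.2.1) (.const _ h2.2.1) (.const _ h3.2.1) (.proj 0)))
  s2 {_ f' g g' h h' p p' q _} h1 h2 h3 h4 h5 :=
    ((((h1.map hm (F := fun x y => BT.S2 (x y) (g y) (h y) (p y) (q y))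
      (.s2 (.proj 0) (.const _ h2.1) (.const _ h3.1) (.const _ h4.1) (.const _ h5.1))).trans hm
      (h2.map hm (F := fun x y => BT.S2 (f' y) (x y) (h y) (p y) (q y))
        (.s2 (.const _ h1.2.1) (.proj 0) (.const _ h3.1) (.const _ h4.1)
          (.const _ h5.1)))).trans hm
      (h3.map hm (F := fun x y => BT.S2 (f' y) (g' y) (x y) (p y) (q y))
        (.s2 (.const _ h1.2.1) (.const _ h2.2.1) (.proj 0) (.const _ h4.1)
          (.const _ h5.1)))).trans hm
      (h4.map hm (F := fun x y => BT.S2 (f' y) (g' y) (h' y) (x y) (q y))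
        (.s2 (.const _ h1.2.1) (.const _ h2.2.1) (.const _ h3.2.1) (.proj 0)
          (.const _ h5.1)))).trans hm
      (h5.map hm (F := fun x y => BT.S2 (f' y) (g' y) (h' y) (p' y) (x y))
        (.s2 (.const _ h1.2.1) (.const _ h2.2.1) (.const _ h3.2.1) (.const _ h4.2.1)
          (.proj 0)))
  mach i hi r t b {_ f' g g' h _} h1 h2 h3 :=
    ((h1.map hm (F := fun x y => mop T i r t b (x y) (g y) (h y))
      (.mach i hi r t b (.proj 0) (.const _ h2.1) (.const _ h3.1))).trans hm
      (h2.map hm (F := fun x y => mop T i r t b (f' y) (x y) (h y))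
        (.mach i hi r t b (.const _ h1.2.1) (.proj 0) (.const _ h3.1)))).trans hm
      (h3.map hm (F := fun x y => mop T i r t b (f' y) (g' y) (x y))
        (.mach i hi r t b (.const _ h1.2.1) (.const _ h2.2.1) (.proj 0)))
  u1 i hi r t b {_ f' g g' h h' p _} h1 h2 h3 h4 :=
    (((h1.map hm (F := fun x y => U1op (mop T i r t b) (x y) (g y) (h y) (p y))
      (.u1 i hi r t b (.proj 0) (.const _ h2.1) (.const _ h3.1) (.const _ h4.1))).trans hm
      (h2.map hm (F := fun x y => U1op (mop T i r t b) (f' y) (x y) (h y) (p y))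
        (.u1 i hi r t b (.const _ h1.2.1) (.proj 0) (.const _ h3.1) (.const _ h4.1)))).trans hm
      (h3.map hm (F := fun x y => U1op (mop T i r t b) (f' y) (g' y) (x y) (p y))
        (.u1 i hi r t b (.const _ h1.2.1) (.const _ h2.2.1) (.proj 0) (.const _ h4.1)))).trans hm
      (h4.map hm (F := fun x y => U1op (mop T i r t b) (f' y) (g' y) (h' y) (x y))
        (.u1 i hi r t b (.const _ h1.2.1) (.const _ h2.2.1) (.const _ h3.2.1) (.proj 0)))
  u2 i hi r t b {_ f' g g' h h' p _} h1 h2 h3 h4 :=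
    (((h1.map hm (F := fun x y => U2op (mop T i r t b) (x y) (g y) (h y) (p y))
      (.u2 i hi r t b (.proj 0) (.const _ h2.1) (.const _ h3.1) (.const _ h4.1))).trans hm
      (h2.map hm (F := fun x y => U2op (mop T i r t b) (f' y) (x y) (h y) (p y))
        (.u2 i hi r t b (.const _ h1.2.1) (.proj 0) (.const _ h3.1) (.const _ h4.1)))).trans hm
      (h3.map hm (F := fun x y => U2op (mop T i r t b) (f' y) (g' y) (x y) (p y))
        (.u2 i hi r t b (.const _ h1.2.1) (.const _ h2.2.1) (.proj 0) (.const _ h4.1)))).trans hm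
      (h4.map hm (F := fun x y => U2op (mop T i r t b) (f' y) (g' y) (h' y) (x y))
        (.u2 i hi r t b (.const _ h1.2.1) (.const _ h2.2.1) (.const _ h3.2.1) (.proj 0)))

end Theta

/-- Lemma 4.3(2): (f,g) ∈ θ̄ iff (f,g) ∈ θ or
{f,g} ⊆ {β⁰(Q),β¹(Q),β²(Q)} for some Q ∈ Cfg⋆. -/
theorem statement18 {k : ℕ} (hk : 0 < k) (T : TM k) (m : ℕ)
    (hm : ((cfgStep T)^[m] (Q0 k)).state = 0) :
    ∀ f g : AA T m, InK T m f → InK T m g →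
      (thetaBar T m f g ↔ theta T m f g ∨
        ∃ Q : Cfg k, InCfgStar T m Q ∧
          (∃ j : Fin 3, f = betaEl T m j Q) ∧ (∃ j : Fin 3, g = betaEl T m j Q)) := by
  intro f g hf hg
  constructor
  · intro h
    exact (h.2.2 (BlockRel T m) (isCongK_blockRel hm) (fun a b hab => ⟨hab.1, hab.2.1, Or.inl hab⟩)
      ⟨.gen_q 0, .gen_q 2, Or.inr ⟨Q0 k, inCfgStar_Q0, ⟨0, qEl_eq_betaEl 0⟩,
        2, qEl_eq_betaEl 2⟩⟩).2.2
  · rintro (h | ⟨Q, hQ, ⟨j, rfl⟩, j', rfl⟩)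
    · exact ⟨hf, hg, fun R _ hθ _ => hθ f g h⟩
    · exact ⟨hf, hg, fun R hR _ h02 => hR.rel_betaEl hm h02 hQ j j'⟩

end Paper
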